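/- Let κ be a regular uncountable cardinal and λ a cardinal with cf(λ) = κ and 2^κ ≤ λ. Let D ∈ NS^*_{κ,λ} and set J = I_{κ,λ}|(D ∩ S^λ_{κ,λ}). Then: (i) J^+ →_J (J^+)²_ω does not hold; (ii) J is not (λ, 2)-distributive. -/

import Mathlib

/-! The partition relation and `(λ, 2)`-distributivity are refuted together. Write `E = D ∩ S`, where
`S = S^λ_{κ,λ}`. Either property yields a homogenisation principle `Homog` (`homog_of_arrow`,
`homog_of_distr`): for a regular `ρ` with `κ < ρ < λ`, a cofinal `A ⊆ E` and a colouring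
`G : ρ × P_κ(λ) → ω`, there are a colour `n`, a cofinal `B ⊆ A`, a set `Y ⊆ ρ` of size `ρ` and
`z β ∈ P_κ(λ)` for `β ∈ Y` such that `G β b = n` whenever `β ∈ Y`, `b ∈ B` and `z β ⊆ b`. It remains
to show that `Homog` fails (`not_homog`).

*Cardinal arithmetic.* `Homog` implies `ν ^ κ ≤ ν⁺` for `2 ^ κ ≤ ν < λ` (`power_le_succ`), by
induction on `ν`. If `cf ν > κ`, functions from `κ` to `ν` are bounded. If `ω < cf ν ≤ κ`, this is
Silver's argument (`silver`). If `cf ν = ω`, then `ν ^ κ ≤ ν ^ ω`, and `Homog` for `ρ = ν⁺`, applied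
to the colouring that records how high in a countable cofinal sequence of `ν` the element `β` is sent
by an injection into `ν` of an initial segment of `ν⁺` attached to `b`, covers the countable subsets
of some `Y` of size `ν⁺` by `ν⁺` many sets of size `< ν` (`power_aleph0_le_succ`). Since
`cf λ = κ` rules out `λ = 2 ^ κ`, it follows that `μ ^ κ ≤ λ` for all `μ < λ`.

*Contradiction.* Consequently the pairs `(t, w)`, where `t : κ → κ⁺` and `w` is a `κ`-sequence of
members of `P_κ(λ)` with a common bound below `λ`, can be listed as `(t_η, w_η)`, `η < λ`. The set
`A` of those infinite `b ∈ C ∩ S` (`C ⊆ D` a club) that contain `w_η(ξ)` for all `η, ξ ∈ b` is cofinal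
(`cofinal_closed`). As `|b ∩ κ| = |b|`, some colouring of `κ⁺` is nonconstant on each `t_η[b ∩ κ]` with
`η ∈ b` and `t_η` injective (`exists_coloring`). Apply `Homog` to these colourings with `ρ = κ⁺`. As
`cf λ = κ`, there are `κ` many `β ∈ Y` whose `z β` have a common bound below `λ`; listing them gives
some `(t_η, w_η)`, and any `b ∈ B` containing `η` is coloured constantly on `t_η[b ∩ κ]`. -/

set_option autoImplicit false

noncomputable section

open Cardinal Set

universe u

/-- `P_κ(λ)`: the collection of subsets of (the set of ordinals below) `λ`
of cardinality `< κ`. -/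
def Pkl (κ lam : Cardinal.{0}) : Set (Set Ordinal.{0}) :=
  {a | a ⊆ Set.Iio lam.ord ∧ #a < Cardinal.lift.{1} κ}

/-- `J` is an ideal on the set `X`. -/
structure IsIdealOn {α : Type u} (J : Set (Set α)) (X : Set α) : Prop where
  empty_mem : ∅ ∈ J
  subset_ground : ∀ A ∈ J, A ⊆ X
  union_mem : ∀ A ∈ J, ∀ B ∈ J, A ∪ B ∈ J
  mem_of_subset : ∀ A ∈ J, ∀ B, B ⊆ A → B ∈ J
  ground_not_mem : X ∉ J

/-- `J⁺`: the `J`-positive subsets of the ground set `X`. -/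
def plusOf {α : Type u} (J : Set (Set α)) (X : Set α) : Set (Set α) :=
  {A | A ⊆ X ∧ A ∉ J}

/-- The restriction `J | A` of an ideal `J` with ground set `X`. -/
def restr {α : Type u} (J : Set (Set α)) (X A : Set α) : Set (Set α) :=
  {B | B ⊆ X ∧ B ∩ A ∈ J}

/-- The ideal `I_{κ,λ}` of noncofinal subsets of `P_κ(λ)`. -/
def Ikl (κ lam : Cardinal.{0}) : Set (Set (Set Ordinal.{0})) :=
  {B | B ⊆ Pkl κ lam ∧ ∃ a ∈ Pkl κ lam, ∀ b ∈ B, ¬a ⊆ b}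

/-- `Q` is a partition of `X`. -/
def IsPartitionOf {α : Type u} (Q : Set (Set α)) (X : Set α) : Prop :=
  (∀ A ∈ Q, A.Nonempty) ∧ (∀ A ∈ Q, A ⊆ X) ∧
    (∀ A ∈ Q, ∀ B ∈ Q, A ≠ B → A ∩ B = ∅) ∧ ⋃₀ Q = X

/-- The piece selection principle `PS⁺(τ, κ, λ)`. -/
def PSPlus (τ κ lam : Cardinal.{0}) : Prop :=
  ∀ Q : Set Ordinal.{0} → Set (Set (Set Ordinal.{0})),
    (∀ a ∈ Pkl κ lam, IsPartitionOf (Q a) (Pkl κ lam) ∧ #(Q a) < Cardinal.lift.{1} τ) →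
    ∃ B ∈ plusOf (Ikl κ lam) (Pkl κ lam), ∃ h : Set Ordinal.{0} → Set (Set Ordinal.{0}),
      (∀ a ∈ Pkl κ lam, h a ∈ Q a) ∧
      ∀ a ∈ B, ∀ b ∈ B, ∃ c, c ∈ h a ∧ c ∈ h b ∧ a ∪ b ⊆ c

/-- The piece selection principle `PS⋆(τ, κ, λ)`. -/
def PSStar (τ κ lam : Cardinal.{0}) : Prop :=
  ∀ Q : Set Ordinal.{0} → Set (Set (Set Ordinal.{0})),
    (∀ a ∈ Pkl κ lam, IsPartitionOf (Q a) (Pkl κ lam) ∧ #(Q a) < Cardinal.lift.{1} τ) →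
    ∃ B ∈ plusOf (Ikl κ lam) (Pkl κ lam), ∃ h : Set Ordinal.{0} → Set (Set Ordinal.{0}),
      (∀ a ∈ Pkl κ lam, h a ∈ Q a) ∧
      ∀ a ∈ B, ∀ b ∈ B, ∃ t ∈ B, a ∪ b ⊆ t ∧
        (∃ c, c ∈ h a ∧ c ∈ h t ∧ t ⊆ c) ∧ ∃ d, d ∈ h b ∧ d ∈ h t ∧ t ⊆ d

/-- The piece selection principle `PS(τ, κ, λ)`. -/
def PSpr (τ κ lam : Cardinal.{0}) : Prop :=
  ∀ Q : Set Ordinal.{0} → Set (Set (Set Ordinal.{0})),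
    (∀ a ∈ Pkl κ lam, IsPartitionOf (Q a) (Pkl κ lam) ∧ #(Q a) < Cardinal.lift.{1} τ) →
    ∃ B ∈ plusOf (Ikl κ lam) (Pkl κ lam), ∃ h : Set Ordinal.{0} → Set (Set Ordinal.{0}),
      (∀ a ∈ Pkl κ lam, h a ∈ Q a) ∧
      ∀ a ∈ B, ∀ b ∈ B, ∃ t ∈ Pkl κ lam, a ∪ b ⊆ t ∧
        (∃ c, c ∈ h a ∧ c ∈ h t ∧ t ⊆ c) ∧ ∃ d, d ∈ h b ∧ d ∈ h t ∧ t ⊆ d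

/-- The one-cardinal piece selection principle `PS⁺(τ, μ)`. -/
def PSPlusOne (τ μ : Cardinal.{0}) : Prop :=
  ∀ Q : Ordinal.{0} → Set (Set Ordinal.{0}),
    (∀ β < μ.ord, IsPartitionOf (Q β) (Set.Ico β μ.ord) ∧ #(Q β) < Cardinal.lift.{1} τ) →
    ∃ B : Set Ordinal.{0}, B ⊆ Set.Iio μ.ord ∧ (∀ γ < μ.ord, ∃ β ∈ B, γ ≤ β) ∧
      ∃ h : Ordinal.{0} → Set Ordinal.{0}, (∀ β ∈ B, h β ∈ Q β) ∧
        ∀ α ∈ B, ∀ β ∈ B, (h α ∩ h β).Nonempty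

/-- `X` is closed below `δ`: every ordinal `< δ` which is a limit of elements
of `X` belongs to `X`. -/
def IsClosedBelow (X : Set Ordinal.{0}) (δ : Ordinal.{0}) : Prop :=
  ∀ β < δ, 0 < β → (∀ γ < β, ∃ ξ ∈ X, γ < ξ ∧ ξ < β) → β ∈ X

/-- `X` is a closed unbounded subset of `δ`. -/
def IsClubBelow (X : Set Ordinal.{0}) (δ : Ordinal.{0}) : Prop :=
  X ⊆ Set.Iio δ ∧ (∀ γ < δ, ∃ ξ ∈ X, γ ≤ ξ) ∧ IsClosedBelow X δ

/-- `δ` is a remarkably good point for the sequence `f` with respect to the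
set of regular cardinals `A` and the ideal `I` on `A`. -/
def RemGoodPoint (A : Set Cardinal.{0}) (I : Set (Set Cardinal.{0}))
    (f : Ordinal.{0} → Cardinal.{0} → Ordinal.{0}) (δ : Ordinal.{0}) : Prop :=
  ∃ X : Set Ordinal.{0}, IsClubBelow X δ ∧
    ∃ Z : Ordinal.{0} → Set Cardinal.{0}, (∀ ξ ∈ X, Z ξ ∈ I) ∧
      ∀ β ∈ X, ∀ ξ ∈ X, β < ξ → ∀ a ∈ A, a ∉ Z β → a ∉ Z ξ → f β a < f ξ a

/-- `sup (a ∩ κ)`. -/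
def supk (κ : Cardinal.{0}) (a : Set Ordinal.{0}) : Ordinal.{0} :=
  sSup (a ∩ Set.Iio κ.ord)

/-- Shelah's covering number `cov(ρ₁, ρ₂, ρ₃, ρ₄)`. -/
def covNum (ρ₁ ρ₂ ρ₃ ρ₄ : Cardinal.{0}) : Cardinal.{1} :=
  sInf {c : Cardinal.{1} | ∃ X : Set (Set Ordinal.{0}), c = #X ∧
    (∀ y ∈ X, y ⊆ Set.Iio ρ₁.ord ∧ #y < Cardinal.lift.{1} ρ₂) ∧
    ∀ a : Set Ordinal.{0}, a ⊆ Set.Iio ρ₁.ord → #a < Cardinal.lift.{1} ρ₃ →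
      ∃ Q, Q ⊆ X ∧ #Q < Cardinal.lift.{1} ρ₄ ∧ a ⊆ ⋃₀ Q}

/-- `κ` is mildly `λ`-ineffable. -/
def MildlyIneffable (κ lam : Cardinal.{0}) : Prop :=
  ∀ s : Set Ordinal.{0} → Set Ordinal.{0}, (∀ a ∈ Pkl κ lam, s a ⊆ a) →
    ∃ S : Set Ordinal.{0}, S ⊆ Set.Iio lam.ord ∧
      ∀ b ∈ Pkl κ lam, ∃ a ∈ Pkl κ lam, b ⊆ a ∧ S ∩ b = s a ∩ b

/-- `Q` is a maximal `J`-almost disjoint family of `J`-positive sets. -/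
def MADOn {α : Type u} (J : Set (Set α)) (X : Set α) (Q : Set (Set α)) : Prop :=
  Q ⊆ plusOf J X ∧ (∀ A ∈ Q, ∀ B ∈ Q, A ≠ B → A ∩ B ∈ J) ∧
    ∀ C ∈ plusOf J X, ∃ A ∈ Q, A ∩ C ∉ J

/-- `Q` is a maximal disjoint family of `J`-positive sets. -/
def MADdOn {α : Type u} (J : Set (Set α)) (X : Set α) (Q : Set (Set α)) : Prop :=
  Q ⊆ plusOf J X ∧ (∀ A ∈ Q, ∀ B ∈ Q, A ≠ B → A ∩ B = ∅) ∧
    ∀ C ∈ plusOf J X, ∃ A ∈ Q, A ∩ C ∉ J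

/-- `(ρ, ν)`-distributivity of an ideal `J` on `P_κ(λ)`. -/
def DistrPkl (κ lam : Cardinal.{0}) (J : Set (Set (Set Ordinal.{0})))
    (ρ ν : Cardinal.{0}) : Prop :=
  ∀ A ∈ plusOf J (Pkl κ lam), ∀ Q : Ordinal.{0} → Set (Set (Set Ordinal.{0})),
    (∀ i, i < ρ.ord → MADOn J (Pkl κ lam) (Q i) ∧ #(Q i) ≤ Cardinal.lift.{1} ν) →
    ∃ B ∈ plusOf J (Pkl κ lam), B ⊆ A ∧
      ∃ h : Ordinal.{0} → Set (Set Ordinal.{0}),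
        (∀ i, i < ρ.ord → h i ∈ Q i) ∧ ∀ i, i < ρ.ord → B \ h i ∈ J

/-- Disjoint `(ρ, ν)`-distributivity of an ideal `J` on `P_κ(λ)`. -/
def DisjDistrPkl (κ lam : Cardinal.{0}) (J : Set (Set (Set Ordinal.{0})))
    (ρ ν : Cardinal.{0}) : Prop :=
  ∀ A ∈ plusOf J (Pkl κ lam), ∀ Q : Ordinal.{0} → Set (Set (Set Ordinal.{0})),
    (∀ i, i < ρ.ord → MADdOn J (Pkl κ lam) (Q i) ∧ #(Q i) ≤ Cardinal.lift.{1} ν) →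
    ∃ B ∈ plusOf J (Pkl κ lam), B ⊆ A ∧
      ∃ h : Ordinal.{0} → Set (Set Ordinal.{0}),
        (∀ i, i < ρ.ord → h i ∈ Q i) ∧ ∀ i, i < ρ.ord → B \ h i ∈ J

/-- Generic `(ρ, ν)`-distributivity of an ideal `J` on a set `X`. -/
def DistrU {α : Type u} (J : Set (Set α)) (X : Set α) (ρ ν : Cardinal.{u}) : Prop :=
  ∀ A ∈ plusOf J X, ∀ Q : Ordinal.{u} → Set (Set α),
    (∀ i, i < ρ.ord → MADOn J X (Q i) ∧ #(Q i) ≤ ν) →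
    ∃ B ∈ plusOf J X, B ⊆ A ∧
      ∃ h : Ordinal.{u} → Set α,
        (∀ i, i < ρ.ord → h i ∈ Q i) ∧ ∀ i, i < ρ.ord → B \ h i ∈ J

/-- `J` is `κ`-complete. -/
def KappaComplete (κ : Cardinal.{0}) (J : Set (Set (Set Ordinal.{0}))) : Prop :=
  ∀ Z : Set (Set (Set Ordinal.{0})), Z ⊆ J → #Z < Cardinal.lift.{1} κ → ⋃₀ Z ∈ J

/-- `J⁺ → (J⁺, ρ)²` relative to `J` (unbalanced partition relation on pairs
from `P_κ(λ)`). -/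
def ArrowPairOrd (κ lam : Cardinal.{0}) (J : Set (Set (Set Ordinal.{0})))
    (ρ : Cardinal.{0}) : Prop :=
  ∀ F : Set Ordinal.{0} → Set Ordinal.{0} → Fin 2, ∀ A ∈ plusOf J (Pkl κ lam),
    (∃ B ∈ plusOf J (Pkl κ lam), B ⊆ A ∧ ∀ a ∈ B, {b | b ∈ B ∧ F a b ≠ 0} ∈ J) ∨
    (∃ c : Ordinal.{0} → Set Ordinal.{0}, (∀ i, i < ρ.ord → c i ∈ A) ∧
      (∀ i j, i < j → j < ρ.ord → c i ⊂ c j) ∧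
      ∀ i j, i < j → j < ρ.ord → F (c i) (c j) = 1)

/-- `X →_κ^J (J⁺, ρ)²` (unbalanced partition relation on `κ × P_κ(λ)`). -/
def ArrowKappaPair (κ lam : Cardinal.{0}) (J : Set (Set (Set Ordinal.{0})))
    (X : Set (Set (Set Ordinal.{0}))) (ρ : Cardinal.{0}) : Prop :=
  ∀ F : Ordinal.{0} → Set Ordinal.{0} → Fin 2, ∀ A ∈ X,
    (∃ B ∈ plusOf J (Pkl κ lam), B ⊆ A ∧
      ∀ a ∈ B, {b | b ∈ B ∧ F (supk κ a) b ≠ 0} ∈ J) ∨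
    (∃ c : Ordinal.{0} → Set Ordinal.{0}, (∀ i, i < ρ.ord → c i ∈ A) ∧
      (∀ i j, i < j → j < ρ.ord → c i ⊂ c j) ∧
      ∀ i j, i < j → j < ρ.ord → F (supk κ (c i)) (c j) = 1)

/-- `{P_κ(λ)} →_J (J⁺)²_ρ` (balanced partition relation with `ρ` colors). -/
def BalArrowAll (κ lam : Cardinal.{0}) (J : Set (Set (Set Ordinal.{0})))
    (ρ : Cardinal.{0}) : Prop :=
  ∀ F : Set Ordinal.{0} → Set Ordinal.{0} → Ordinal.{0}, (∀ a b, F a b < ρ.ord) →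
    ∃ i, i < ρ.ord ∧ ∃ B ∈ plusOf J (Pkl κ lam),
      ∃ Z : Set Ordinal.{0} → Set (Set Ordinal.{0}), (∀ a ∈ B, Z a ∈ J) ∧
        ∀ a ∈ B, ∀ b ∈ B, b ∉ Z a → F a b = i

/-- `J⁺ →_J (J⁺)²_ω` (balanced partition relation with `ω` colors). -/
def ArrowOmegaColors (κ lam : Cardinal.{0}) (J : Set (Set (Set Ordinal.{0}))) : Prop :=
  ∀ F : Set Ordinal.{0} → Set Ordinal.{0} → ℕ, ∀ A ∈ plusOf J (Pkl κ lam),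
    ∃ i : ℕ, ∃ B ∈ plusOf J (Pkl κ lam), B ⊆ A ∧
      ∃ Z : Set Ordinal.{0} → Set (Set Ordinal.{0}), (∀ a ∈ B, Z a ∈ J) ∧
        ∀ a ∈ B, ∀ b ∈ B, b ∉ Z a → F a b = i

/-- `J⁺ →_J (J⁺)ⁿ_ρ` (balanced partition relation on `n`-tuples with `ρ` colors). -/
def ArrowN (κ lam : Cardinal.{0}) (J : Set (Set (Set Ordinal.{0}))) (n : ℕ)
    (ρ : Cardinal.{0}) : Prop :=
  ∀ F : (Fin n → Set Ordinal.{0}) → Ordinal.{0}, (∀ s, F s < ρ.ord) →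
    ∀ A ∈ plusOf J (Pkl κ lam),
      ∃ i, i < ρ.ord ∧ ∃ B ∈ plusOf J (Pkl κ lam), B ⊆ A ∧
        ∃ Z : Set Ordinal.{0} → Set (Set Ordinal.{0}), (∀ a ∈ B, Z a ∈ J) ∧
          ∀ s : Fin n → Set Ordinal.{0}, (∀ m, s m ∈ B) →
            (∀ m k : Fin n, k < m → s m ∉ Z (s k)) → F s = i

/-- The projected ideal `J ↾ κ` on `κ`. -/
def restrK (κ lam : Cardinal.{0}) (J : Set (Set (Set Ordinal.{0}))) :
    Set (Set Ordinal.{0}) :=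
  {X | X ⊆ Set.Iio κ.ord ∧ {a | a ∈ Pkl κ lam ∧ supk κ a ∈ X} ∈ J}

/-- `J` is a weak `π`-point. -/
def WeakPiPoint (κ lam : Cardinal.{0}) (J : Set (Set (Set Ordinal.{0}))) : Prop :=
  ∀ A ∈ plusOf J (Pkl κ lam), ∀ f : Ordinal.{0} → Set (Set Ordinal.{0}),
    (∀ α, α < κ.ord → f α ∈ J) →
    ∃ B ∈ plusOf J (Pkl κ lam), B ⊆ A ∧ ∀ α, α < κ.ord → B ∩ f α ∈ Ikl κ lam

/-- `J` is a weak `χ`-point. -/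
def WeakChiPoint (κ lam : Cardinal.{0}) (J : Set (Set (Set Ordinal.{0}))) : Prop :=
  ∀ A ∈ plusOf J (Pkl κ lam), ∀ g : Ordinal.{0} → Set Ordinal.{0},
    (∀ α, α < κ.ord → g α ∈ Pkl κ lam) →
    ∃ B ∈ plusOf J (Pkl κ lam), B ⊆ A ∧
      ∀ a ∈ B, ∀ b ∈ B, supk κ a < supk κ b → g (supk κ a) ⊆ b

/-- `C` is a closed unbounded subset of `P_κ(λ)`. -/
def IsClubPkl (κ lam : Cardinal.{0}) (C : Set (Set Ordinal.{0})) : Prop :=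
  C ⊆ Pkl κ lam ∧ (∀ a ∈ Pkl κ lam, ∃ b ∈ C, a ⊆ b) ∧
    ∀ β : Ordinal.{0}, 0 < β → β < κ.ord →
      ∀ f : Ordinal.{0} → Set Ordinal.{0},
        (∀ i, i < β → f i ∈ C) → (∀ i j, i ≤ j → j < β → f i ⊆ f j) →
        (⋃ i ∈ Set.Iio β, f i) ∈ C

/-- The set `S^λ_{κ,λ} = {a ∈ P_κ(λ) : |a| = |a ∩ κ|}`. -/
def Slamset (κ lam : Cardinal.{0}) : Set (Set Ordinal.{0}) :=
  {a | a ∈ Pkl κ lam ∧ #a = #((a ∩ Set.Iio κ.ord : Set Ordinal.{0}))}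

/-- The ideal `I_κ` of bounded subsets of `κ`. -/
def Ibd (κ : Cardinal.{0}) : Set (Set Ordinal.{0}) :=
  {X | X ⊆ Set.Iio κ.ord ∧ ∃ α, α < κ.ord ∧ X ⊆ Set.Iio α}

/-- The ideal extension principle `IE(τ, κ, I_κ)`. -/
def IEkappa (τ κ : Cardinal.{0}) : Prop :=
  ∀ Q : Ordinal.{0} → Set (Set Ordinal.{0}),
    (∀ α < κ.ord, IsPartitionOf (Q α) (Set.Ico α κ.ord) ∧ #(Q α) < Cardinal.lift.{1} τ) →
    ∃ h : Ordinal.{0} → Set Ordinal.{0}, (∀ α < κ.ord, h α ∈ Q α) ∧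
      ∃ K : Set (Set Ordinal.{0}), IsIdealOn K (Set.Iio κ.ord) ∧ Ibd κ ⊆ K ∧
        ∀ α < κ.ord, Set.Iio κ.ord \ h α ∈ K

/-- The transversal property `PT(κ, τ)`. -/
def PT (κ τ : Cardinal.{0}) : Prop :=
  ∀ X : Ordinal.{0} → Set Ordinal.{0},
    (∀ α, α < κ.ord → #(X α) < Cardinal.lift.{1} τ) →
    (¬∃ g : Ordinal.{0} → Ordinal.{0}, (∀ α, α < κ.ord → g α ∈ X α) ∧
        Set.InjOn g (Set.Iio κ.ord)) →
    ∃ b : Set Ordinal.{0}, b ⊆ Set.Iio κ.ord ∧ #b < Cardinal.lift.{1} κ ∧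
      ¬∃ g : Ordinal.{0} → Ordinal.{0}, (∀ α ∈ b, g α ∈ X α) ∧ Set.InjOn g b

/-- `(T, lt)` is a tree whose height function is `ht` : the predecessors of
any node `t` are well-ordered by `lt`, in order type `ht t`. -/
def IsTreeWithHeight (T : Type) (lt : T → T → Prop) (ht : T → Ordinal.{0}) : Prop :=
  (∀ t, ¬lt t t) ∧ (∀ r s t, lt r s → lt s t → lt r t) ∧
    (∀ s t, lt s t → ht s < ht t) ∧
    (∀ t, ∀ α, α < ht t → ∃ s, lt s t ∧ ht s = α) ∧
    (∀ s₁ s₂ t, lt s₁ t → lt s₂ t → ht s₁ = ht s₂ → s₁ = s₂) ∧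
    (∀ s₁ s₂ t, lt s₁ t → lt s₂ t → ht s₁ < ht s₂ → lt s₁ s₂)

/-- The tree property `TP(κ)` : every tree of height `κ` whose levels have
size `< κ` has a `κ`-branch. -/
def TP (κ : Cardinal.{0}) : Prop :=
  ∀ (T : Type) (lt : T → T → Prop) (ht : T → Ordinal.{0}),
    IsTreeWithHeight T lt ht →
    (∀ t, ht t < κ.ord) →
    (∀ α < κ.ord, ∃ t, ht t = α) →
    (∀ α : Ordinal.{0}, #{t : T // ht t = α} < κ) →
    ∃ B : Set T, (∀ s ∈ B, ∀ t ∈ B, s ≠ t → lt s t ∨ lt t s) ∧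
      ∀ α < κ.ord, ∃ t ∈ B, ht t = α


/-! ### Silver's argument at uncountable cofinality -/

/-- If every initial segment of a total relation has size at most `ν`, the whole type has size at most
`ν⁺`: an element outside the initial segments given by `ν⁺` many elements would lie above all of them. -/
theorem mk_le_succ_of_total {W : Type} (R : W → W → Prop) (ν : Cardinal.{0}) (hν : ℵ₀ ≤ ν)
    (htot : ∀ f g, R f g ∨ R g f) (hR : ∀ g, #{f | R f g} ≤ ν) : #W ≤ Order.succ ν := by
  by_contra hcon
  rw [not_le] at hcon
  obtain ⟨S, hS⟩ := Cardinal.le_mk_iff_exists_set.1 hcon.le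
  have hU : #(⋃ g ∈ S, {f | R f g} : Set W) ≤ Order.succ ν := by
    refine (Cardinal.mk_biUnion_le _ _).trans ?_
    rw [hS]
    calc Order.succ ν * _ ≤ Order.succ ν * Order.succ ν := by
          gcongr
          exact ciSup_le' fun g => (hR _).trans (Order.le_succ ν)
      _ = Order.succ ν := Cardinal.mul_eq_self (hν.trans (Order.le_succ ν))
  have : ∃ f, f ∉ (⋃ g ∈ S, {f | R f g} : Set W) := by
    by_contra hall
    push Not at hall
    have : (⋃ g ∈ S, {f | R f g} : Set W) = Set.univ := eq_univ_of_forall hall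
    rw [this, Cardinal.mk_univ] at hU
    exact absurd hU (not_le.2 hcon)
  obtain ⟨f, hf⟩ := this
  have hsub : S ⊆ {g | R g f} := by
    intro g hg
    rcases htot f g with h | h
    · exact absurd (mem_biUnion hg h) hf
    · exact h
  have := (Cardinal.mk_le_mk_of_subset hsub).trans (hR f)
  rw [hS] at this
  exact absurd this (not_le.2 (Order.lt_succ ν))

theorem mk_Iio_ord_lt {c : Cardinal.{0}} (i : c.ord.ToType) : #(Iio i) < c := by
  have := Cardinal.mk_Iio_lt i (by simp)
  rwa [Cardinal.mk_ord_toType] at this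

theorem exists_mk_Iio_eq {μ ν : Cardinal.{0}} (h : μ < ν) : ∃ x : ν.ord.ToType, #(Iio x) = μ := by
  have h1 : μ.ord < Ordinal.type (α := ν.ord.ToType) (· < ·) := by
    simpa using Cardinal.ord_lt_ord.2 h
  refine ⟨Ordinal.enum (α := ν.ord.ToType) (· < ·) ⟨μ.ord, h1⟩, ?_⟩
  have := Ordinal.card_typein (r := (fun a b : ν.ord.ToType => a < b))
    (Ordinal.enum (α := ν.ord.ToType) (· < ·) ⟨μ.ord, h1⟩)
  rw [Ordinal.typein_enum, Cardinal.card_ord] at this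
  exact this.symm
theorem exists_gt_ord {ν : Cardinal.{0}} (h : ℵ₀ ≤ ν) (x : ν.ord.ToType) : ∃ y, x < y := by
  have := Cardinal.noMaxOrder h
  exact exists_gt x

/-- Stationarity, phrased through functions: every `k : Θ → Θ` has a nonzero closure point in `T`. -/
def Stat {Θ : Type} [LinearOrder Θ] (T : Set Θ) : Prop :=
  ∀ k : Θ → Θ, ∃ i ∈ T, (∃ j, j < i) ∧ ∀ j < i, k j < i

/-- A weak form of Fodor's lemma: a regressive function on a stationary set is constant on an unbounded
subset. -/
theorem Stat.fodor {Θ : Type} [LinearOrder Θ] {T : Set Θ} (hT : Stat T) (r : Θ → Θ)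
    (hr : ∀ i ∈ T, (∃ j, j < i) → r i < i) :
    ∃ j, ∀ m, ∃ i ∈ T, m < i ∧ (∃ j, j < i) ∧ r i = j := by
  by_contra hcon
  push Not at hcon
  choose k hk using hcon
  obtain ⟨i, hiT, hi, hik⟩ := hT k
  exact hk (r i) i hiT (hik _ (hr i hiT hi)) hi rfl

theorem exists_gt_of_small {θ : Cardinal.{0}} (hθ : θ.IsRegular) (S : Set θ.ord.ToType)
    (hS : #S < θ) : ∃ x, ∀ s ∈ S, s < x := by
  by_contra hcon
  push Not at hcon
  have hc : IsCofinal S := hcon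
  have := Order.cof_le hc
  rw [Ordinal.cof_toType, hθ.cof_ord] at this
  exact absurd this (not_le.2 hS)

/-- Of two sets covering an uncountable regular cardinal, one is stationary: otherwise, iterating two
counterexample functions `ω` times produces a common closure point. -/
theorem stat_or {θ : Cardinal.{0}} (hθ : θ.IsRegular) (hθ' : ℵ₀ < θ) (T₁ T₂ : Set θ.ord.ToType)
    (hT : ∀ i, i ∈ T₁ ∨ i ∈ T₂) : Stat T₁ ∨ Stat T₂ := by
  by_contra hcon
  rw [not_or] at hcon
  obtain ⟨h1, h2⟩ := hcon
  simp only [Stat] at h1 h2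
  push Not at h1 h2
  obtain ⟨k1, hk1⟩ := h1
  obtain ⟨k2, hk2⟩ := h2
  have hK : ∀ x : θ.ord.ToType, ∃ y, x < y ∧ ∀ j ≤ x, k1 j < y ∧ k2 j < y := by
    intro x
    have hx : #(Iic x) < θ := by
      rw [← Iio_insert]
      refine (Cardinal.mk_insert_le).trans_lt ?_
      exact Cardinal.add_lt_of_lt hθ.aleph0_le (mk_Iio_ord_lt x)
        (one_lt_aleph0.trans hθ')
    obtain ⟨y, hy⟩ := exists_gt_of_small hθ (insert x (k1 '' Iic x ∪ k2 '' Iic x)) (by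
      refine (Cardinal.mk_insert_le).trans_lt ?_
      refine Cardinal.add_lt_of_lt hθ.aleph0_le ?_ (one_lt_aleph0.trans hθ')
      refine (Cardinal.mk_union_le _ _).trans_lt ?_
      exact Cardinal.add_lt_of_lt hθ.aleph0_le (Cardinal.mk_image_le.trans_lt hx)
        (Cardinal.mk_image_le.trans_lt hx))
    exact ⟨y, hy _ (mem_insert _ _), fun j hj =>
      ⟨hy _ (mem_insert_of_mem _ (Or.inl ⟨j, hj, rfl⟩)), hy _ (mem_insert_of_mem _ (Or.inr ⟨j, hj, rfl⟩))⟩⟩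
  choose K hKlt hKk using hK
  have hne : Nonempty θ.ord.ToType := by
    rw [← Cardinal.mk_ne_zero_iff, Cardinal.mk_ord_toType]
    exact hθ.pos.ne'
  obtain ⟨x0⟩ := hne
  let s : ℕ → θ.ord.ToType := fun n => K^[n] x0
  have hs : ∀ n, s (n + 1) = K (s n) := fun n => Function.iterate_succ_apply' K n x0
  obtain ⟨ub, hub⟩ := exists_gt_of_small hθ (range s) (Cardinal.mk_range_le.trans_lt (by simpa using hθ'))
  let U : Set θ.ord.ToType := {x | ∀ n, s n < x}
  have hUne : U.Nonempty := ⟨ub, fun n => hub _ (mem_range_self n)⟩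
  let i := WellFounded.min wellFounded_lt U hUne
  have hi : i ∈ U := WellFounded.min_mem _ _ _
  have hmin : ∀ j < i, ∃ n, j ≤ s n := by
    intro j hj
    by_contra hc
    push Not at hc
    exact WellFounded.not_lt_min wellFounded_lt U (x := j) hc hj
  have hcl : ∀ j < i, k1 j < i ∧ k2 j < i := by
    intro j hj
    obtain ⟨n, hn⟩ := hmin j hj
    have h := hKk (s n) j hn
    rw [← hs] at h
    exact ⟨h.1.trans (hi _), h.2.trans (hi _)⟩
  have hlow : ∃ j, j < i := ⟨s 0, hi 0⟩
  rcases hT i with h | h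
  · obtain ⟨j, hj, hj'⟩ := hk1 i h hlow
    exact absurd (hcl j hj).1 (not_lt.2 hj')
  · obtain ⟨j, hj, hj'⟩ := hk2 i h hlow
    exact absurd (hcl j hj).2 (not_lt.2 hj')

theorem exists_cofinal_fun (ν : Cardinal.{0}) :
    ∃ c : ν.ord.cof.ord.ToType → ν.ord.ToType, ∀ x, ∃ j, x ≤ c j := by
  obtain ⟨S, hS, hS'⟩ := Order.exists_cof_eq ν.ord.ToType
  rw [Ordinal.cof_toType] at hS'
  have : #(ν.ord.cof.ord.ToType) = #S := by rw [hS', Cardinal.mk_ord_toType]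
  obtain ⟨e⟩ := Cardinal.eq.1 this
  refine ⟨fun j => e j, fun x => ?_⟩
  obtain ⟨s, hs, hxs⟩ := hS x
  exact ⟨e.symm ⟨s, hs⟩, by simpa using hxs⟩

/-- Silver's argument. Take `P j` (`j < θ = cf ν`) cofinal initial segments of `ν` and
`N i = ⋃ j < i, P j`. Truncating `f : κ → ν` to `N i` gives an element of a set of size at most
`|N i|⁺`, which is coded by an ordinal `G f i < |N i|⁺`; distinct functions have eventually distinct
codes. Order functions by `G f i ≤ G g i` for stationarily many `i`. An injection of the initial
segment up to `G g i` into `N i` makes `i ↦ G f i` regressive, so by Fodor `f` is determined by some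
`j < θ` and a partial function from `θ` to `P j`; hence each `g` has at most `ν` predecessors. -/
theorem silver (κ ν : Cardinal.{0}) (hκ : ℵ₀ ≤ κ) (h2 : 2 ^ κ < ν) (hc : ℵ₀ < ν.ord.cof)
    (hcκ : ν.ord.cof ≤ κ) (IH : ∀ μ < ν, 2 ^ κ ≤ μ → μ ^ κ ≤ Order.succ μ) :
    ν ^ κ ≤ Order.succ ν := by
  classical
  have hκν : κ < ν := (Cardinal.cantor κ).trans h2
  have hν : ℵ₀ ≤ ν := hκ.trans hκν.le
  obtain ⟨θ, hθdef⟩ : ∃ θ, θ = ν.ord.cof := ⟨_, rfl⟩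
  have hθ : θ.IsRegular := by
    rw [hθdef]; exact Cardinal.isRegular_cof (Cardinal.isSuccLimit_ord hν)
  have hθκ : θ ≤ κ := hθdef ▸ hcκ
  have hθν : θ < ν := hθκ.trans_lt hκν
  have hθ0 : ℵ₀ < θ := hθdef ▸ hc
  obtain ⟨c0, hc0⟩ : ∃ c : θ.ord.ToType → ν.ord.ToType, ∀ x, ∃ j, x ≤ c j := by
    rw [hθdef]; exact exists_cofinal_fun ν
  -- a point with at least `2 ^ κ` predecessors
  obtain ⟨x0, hx0⟩ : ∃ x0 : ν.ord.ToType, 2 ^ κ ≤ #(Iio x0) :=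
    (exists_mk_Iio_eq h2).imp fun _ h => h.ge
  let Θ := θ.ord.ToType
  let V := ν.ord.ToType
  let P : Θ → Set V := fun j => Iio (max x0 (c0 j))
  have hP2 : ∀ j, 2 ^ κ ≤ #(P j) := fun j =>
    hx0.trans (Cardinal.mk_le_mk_of_subset (Iio_subset_Iio (le_max_left _ _)))
  have hPν : ∀ j, #(P j) < ν := fun j => mk_Iio_ord_lt _
  have hPcov : ∀ x, ∃ j, x ∈ P j := by
    intro x
    obtain ⟨y, hy⟩ := exists_gt_ord hν x
    obtain ⟨j, hj⟩ := hc0 y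
    exact ⟨j, hy.trans_le (hj.trans (le_max_right _ _))⟩
  let N : Θ → Set V := fun i => ⋃ j ∈ Iio i, P j
  have hN2 : ∀ i, (∃ j, j < i) → 2 ^ κ ≤ #(N i) := by
    rintro i ⟨j, hj⟩
    exact (hP2 j).trans (Cardinal.mk_le_mk_of_subset (subset_biUnion_of_mem (u := P) hj))
  have hNν : ∀ i, #(N i) < ν := by
    intro i
    obtain ⟨y, hy⟩ : ∃ y : V, ∀ j < i, max x0 (c0 j) < y := by
      by_contra hcon
      push Not at hcon
      have hcof : IsCofinal ((fun j => max x0 (c0 j)) '' Iio i) := by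
        intro y
        obtain ⟨j, hj, hy⟩ := hcon y
        exact ⟨_, ⟨j, hj, rfl⟩, hy⟩
      have h1 := Order.cof_le hcof
      rw [Ordinal.cof_toType, ← hθdef] at h1
      exact absurd (h1.trans Cardinal.mk_image_le) (not_le.2 (mk_Iio_ord_lt i))
    refine (Cardinal.mk_le_mk_of_subset ?_).trans_lt (mk_Iio_ord_lt y)
    exact iUnion₂_subset fun j hj => Iio_subset_Iio (hy j hj).le
  let K := κ.ord.ToType
  have hK : #K = κ := Cardinal.mk_ord_toType κ
  let O : Θ → Type := fun i => (Order.succ #(N i)).ord.ToType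
  have hO : ∀ i, Nonempty ((K → Option (N i)) ↪ O i) := by
    intro i
    refine Cardinal.le_def _ _ |>.1 ?_
    rw [Cardinal.mk_ord_toType, ← Cardinal.power_def, Cardinal.mk_option, hK]
    by_cases hi : ∃ j, j < i
    · have hinf : ℵ₀ ≤ #(N i) := (hκ.trans (Cardinal.cantor κ).le).trans (hN2 i hi)
      rw [Cardinal.add_one_eq hinf]
      exact IH _ (hNν i) (hN2 i hi)
    · have : N i = ∅ := by
        simp only [N]
        push Not at hi
        ext x
        simp only [mem_iUnion, mem_Iio, mem_empty_iff_false, iff_false]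
        rintro ⟨j, hj, -⟩
        exact absurd hj (not_lt.2 (hi j))
      rw [this]
      simp
  let e : ∀ i, (K → Option (N i)) ↪ O i := fun i => (hO i).some
  let tr : (K → V) → ∀ i, K → Option (N i) := fun f i ξ =>
    if h : f ξ ∈ N i then some ⟨f ξ, h⟩ else none
  let G : (K → V) → ∀ i, O i := fun f i => e i (tr f i)
  have hG : ∀ f g, (∀ m, ∃ i, m < i ∧ G f i = G g i) → f = g := by
    intro f g hfg
    funext ξ
    obtain ⟨j, hj⟩ := hPcov (f ξ)
    obtain ⟨j', hj'⟩ := hPcov (g ξ)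
    obtain ⟨i, hi, hGi⟩ := hfg (max j j')
    have h1 : f ξ ∈ N i := mem_biUnion (t := P) (lt_of_le_of_lt (le_max_left _ _) hi) hj
    have h2 : g ξ ∈ N i := mem_biUnion (t := P) (lt_of_le_of_lt (le_max_right _ _) hi) hj'
    have h3 := congrFun ((e i).injective hGi) ξ
    simp only [tr, dif_pos h1, dif_pos h2, Option.some.injEq, Subtype.mk.injEq] at h3
    exact h3
  have key : #(K → V) ≤ Order.succ ν := by
    refine mk_le_succ_of_total (fun f g => Stat {i | G f i ≤ G g i}) ν hν
      (fun f g => stat_or hθ hθ0 _ _ fun i => le_total (G f i) (G g i)) fun g => ?_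
    -- each initial segment of `O i` injects into `N i`
    have hh : ∀ i, ∃ h : O i → V, (∃ j, j < i) →
        InjOn h (Iic (G g i)) ∧ ∀ x ∈ Iic (G g i), h x ∈ N i := by
      intro i
      by_cases hi : ∃ j, j < i
      · have hinf : ℵ₀ ≤ #(N i) := (hκ.trans (Cardinal.cantor κ).le).trans (hN2 i hi)
        have hle : #(Iic (G g i)) ≤ #(N i) := by
          rw [← Iio_insert]
          refine (Cardinal.mk_insert_le).trans ?_
          exact Cardinal.add_le_of_le hinf (Order.lt_succ_iff.1 (mk_Iio_ord_lt (G g i)))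
            (one_le_aleph0.trans hinf)
        obtain ⟨E⟩ := Cardinal.le_def _ _ |>.1 hle
        refine ⟨fun x => if hx : x ∈ Iic (G g i) then E ⟨x, hx⟩ else x0, fun _ => ⟨?_, ?_⟩⟩
        · intro x hx y hy hxy
          simp only [dif_pos hx, dif_pos hy] at hxy
          exact congrArg Subtype.val (E.injective (Subtype.ext hxy))
        · intro x hx
          simp only [dif_pos hx]
          exact (E ⟨x, hx⟩).2
      · exact ⟨fun _ => x0, fun h => absurd h hi⟩
    choose h hinj hmem using hh
    -- `p` codes `f` by a stage `j` and a partial function from `Θ` to `P j` with unbounded domain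
    have hcode : ∀ f : {f | Stat {i | G f i ≤ G g i}}, ∃ p : Σ j : Θ, Θ → Option (P j),
        (∀ m, ∃ i, m < i ∧ ∃ x, p.2 i = some x) ∧
        ∀ i x, p.2 i = some x → (∃ j, j < i) ∧ G f.1 i ≤ G g i ∧ x.1 = h i (G f.1 i) := by
      rintro ⟨f, hf⟩
      have hr : ∀ i, ∃ r, i ∈ {i | G f i ≤ G g i} → (∃ j, j < i) →
          r < i ∧ h i (G f i) ∈ P r := by
        intro i
        by_cases hi : i ∈ {i | G f i ≤ G g i} ∧ ∃ j, j < i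
        · have := hmem i hi.2 _ hi.1
          simp only [N, mem_iUnion] at this
          obtain ⟨r, hr, hr'⟩ := this
          exact ⟨r, fun _ _ => ⟨hr, hr'⟩⟩
        · exact ⟨i, fun h1 h2 => absurd ⟨h1, h2⟩ hi⟩
      choose r hr using hr
      obtain ⟨j, hj⟩ := hf.fodor r fun i hi hi' => (hr i hi hi').1
      refine ⟨⟨j, fun i => if hi : (∃ j, j < i) ∧ G f i ≤ G g i ∧ h i (G f i) ∈ P j then
        some ⟨_, hi.2.2⟩ else none⟩, fun m => ?_, fun i x hx => ?_⟩
      · obtain ⟨i, hi, hmi, hi', hrj⟩ := hj m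
        have h1 : h i (G f i) ∈ P j := hrj ▸ (hr i hi hi').2
        exact ⟨i, hmi, ⟨_, h1⟩, dif_pos ⟨hi', hi, h1⟩⟩
      · by_cases hi : (∃ j, j < i) ∧ G f i ≤ G g i ∧ h i (G f i) ∈ P j
        · simp only [dif_pos hi, Option.some.injEq] at hx
          exact ⟨hi.1, hi.2.1, by rw [← hx]⟩
        · simp only [dif_neg hi] at hx
          exact absurd hx (by simp)
    choose p hp using hcode
    have hpinj : Function.Injective p := by
      intro f f' hff
      refine Subtype.ext (hG _ _ fun m => ?_)
      obtain ⟨i, hi, x, hx⟩ := (hp f).1 m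
      have h1 := (hp f).2 i x hx
      have hp' := (hp f').2 i
      rw [← hff] at hp'
      have h2 := hp' x hx
      exact ⟨i, hi, hinj i h1.1 h1.2.1 h2.2.1 (h1.2.2.symm.trans h2.2.2)⟩
    refine (Cardinal.mk_le_of_injective hpinj).trans ?_
    rw [Cardinal.mk_sigma]
    refine (Cardinal.sum_le_mk_mul_iSup _).trans ?_
    calc #Θ * _ ≤ ν * ν := by
          gcongr
          · rw [Cardinal.mk_ord_toType]; exact hθν.le
          refine ciSup_le' fun j => ?_
          have hinf : ℵ₀ ≤ #(P j) := (hκ.trans (Cardinal.cantor κ).le).trans (hP2 j)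
          rw [← Cardinal.power_def, Cardinal.mk_option, Cardinal.mk_ord_toType,
            Cardinal.add_one_eq hinf]
          refine (Cardinal.power_le_power_left ?_ hθκ).trans ((IH _ (hPν j) (hP2 j)).trans ?_)
          · exact (Cardinal.aleph0_pos.trans_le hinf).ne'
          · exact Order.succ_le_of_lt (hPν j)
      _ = ν := Cardinal.mul_eq_self hν
  rw [← Cardinal.power_def, hK, Cardinal.mk_ord_toType] at key
  exact key

/-! ### Bounding powers below `λ` -/

/-- The inductive bound also handles the `κ`-th powers of cardinals below `2 ^ κ`. -/
theorem power_le_of_lt {κ ν μ : Cardinal.{0}} (h2 : 2 ^ κ < ν) (hμ : μ < ν)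
    (IH : ∀ μ < ν, 2 ^ κ ≤ μ → μ ^ κ ≤ Order.succ μ) : μ ^ κ ≤ ν :=
  calc μ ^ κ ≤ (max μ (2 ^ κ)) ^ κ := Cardinal.power_le_power_right (le_max_left _ _)
    _ ≤ Order.succ (max μ (2 ^ κ)) := IH _ (max_lt hμ h2) (le_max_right _ _)
    _ ≤ ν := Order.succ_le_of_lt (max_lt hμ h2)

theorem power_le_self_of_lt_cof (κ ν : Cardinal.{0}) (hκ : ℵ₀ ≤ κ) (h2 : 2 ^ κ < ν)
    (hc : κ < ν.ord.cof) (IH : ∀ μ < ν, 2 ^ κ ≤ μ → μ ^ κ ≤ Order.succ μ) : ν ^ κ ≤ ν := by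
  have hν : ℵ₀ ≤ ν := hκ.trans ((Cardinal.cantor κ).le.trans h2.le)
  let V := ν.ord.ToType
  let K := κ.ord.ToType
  have hb : ∀ f : K → V, ∃ p : Σ y : V, K → Iio y, ∀ ξ, (p.2 ξ : V) = f ξ := by
    intro f
    have : ∃ y, ∀ ξ, f ξ < y := by
      by_contra hcon
      push Not at hcon
      have hcof : IsCofinal (range f) := fun y => by
        obtain ⟨ξ, h⟩ := hcon y
        exact ⟨_, mem_range_self ξ, h⟩
      have h1 := Order.cof_le hcof
      rw [Ordinal.cof_toType] at h1
      have h2 := h1.trans Cardinal.mk_range_le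
      rw [Cardinal.mk_ord_toType] at h2
      exact absurd h2 (not_le.2 hc)
    obtain ⟨y, hy⟩ := this
    exact ⟨⟨y, fun ξ => ⟨f ξ, hy ξ⟩⟩, fun ξ => rfl⟩
  choose p hp using hb
  have hinj : Function.Injective p := by
    intro f g hfg
    funext ξ
    rw [← hp f, ← hp g, hfg]
  have h1 := Cardinal.mk_le_of_injective hinj
  rw [Cardinal.mk_sigma, ← Cardinal.power_def, Cardinal.mk_ord_toType, Cardinal.mk_ord_toType] at h1
  refine h1.trans ((Cardinal.sum_le_mk_mul_iSup _).trans ?_)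
  calc #V * _ ≤ ν * ν := by
        gcongr
        · rw [Cardinal.mk_ord_toType]
        refine ciSup_le' fun y => ?_
        rw [← Cardinal.power_def, Cardinal.mk_ord_toType]
        exact power_le_of_lt h2 (mk_Iio_ord_lt y) IH
    _ = ν := Cardinal.mul_eq_self hν

theorem exists_omega_cofinal {ν : Cardinal.{0}} (hν : ℵ₀ ≤ ν) (hc : ν.ord.cof = ℵ₀) :
    ∃ c : ℕ → ν.ord.ToType, ∀ x, ∃ n, x < c n := by
  obtain ⟨c, hcc⟩ := exists_cofinal_fun ν
  have : #ℕ = #(ν.ord.cof.ord.ToType) := by rw [Cardinal.mk_ord_toType, hc, Cardinal.mk_nat]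
  obtain ⟨e⟩ := Cardinal.eq.1 this
  refine ⟨fun n => c (e n), fun x => ?_⟩
  obtain ⟨y, hy⟩ := exists_gt_ord hν x
  obtain ⟨j, hj⟩ := hcc y
  exact ⟨e.symm j, by simpa using hy.trans_le hj⟩

theorem power_le_power_aleph0 (κ ν : Cardinal.{0}) (hκ : ℵ₀ ≤ κ) (h2 : 2 ^ κ < ν)
    (hc : ν.ord.cof = ℵ₀) (IH : ∀ μ < ν, 2 ^ κ ≤ μ → μ ^ κ ≤ Order.succ μ) :
    ν ^ κ ≤ ν ^ ℵ₀ := by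
  classical
  have hν : ℵ₀ ≤ ν := hκ.trans ((Cardinal.cantor κ).le.trans h2.le)
  let V := ν.ord.ToType
  let K := κ.ord.ToType
  obtain ⟨c, hcc⟩ := exists_omega_cofinal hν hc
  have hE : ∀ n, Nonempty ((K → Option (Iio (c n))) ↪ V) := by
    intro n
    refine Cardinal.le_def _ _ |>.1 ?_
    rw [← Cardinal.power_def, Cardinal.mk_option, Cardinal.mk_ord_toType, Cardinal.mk_ord_toType]
    refine power_le_of_lt h2 ?_ IH
    exact Cardinal.add_lt_of_lt hν (mk_Iio_ord_lt _) (one_lt_aleph0.trans_le hν)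
  let p : (K → V) → ℕ → V := fun f n => (hE n).some fun ξ =>
    if h : f ξ ∈ Iio (c n) then some ⟨f ξ, h⟩ else none
  have hinj : Function.Injective p := by
    intro f g hfg
    funext ξ
    obtain ⟨n, hn⟩ := hcc (max (f ξ) (g ξ))
    have h1 : f ξ ∈ Iio (c n) := (le_max_left _ _).trans_lt hn
    have h2 : g ξ ∈ Iio (c n) := (le_max_right _ _).trans_lt hn
    have h3 := congrFun ((hE n).some.injective (congrFun hfg n)) ξ
    simp only [dif_pos h1, dif_pos h2, Option.some.injEq, Subtype.mk.injEq] at h3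
    exact h3
  have h1 := Cardinal.mk_le_of_injective hinj
  rw [← Cardinal.power_def, ← Cardinal.power_def, Cardinal.mk_ord_toType, Cardinal.mk_ord_toType,
    Cardinal.mk_nat] at h1
  exact h1

/-- The bound `ν ^ κ ≤ ν⁺` on `[2 ^ κ, λ)`, assuming `hΩ`, which supplies the case of countable
cofinality. -/
theorem power_le_succ (κ lam : Cardinal.{0}) (hκ : ℵ₀ ≤ κ)
    (hΩ : ∀ ν, 2 ^ κ < ν → ν < lam → ν.ord.cof = ℵ₀ →
      (∀ μ < ν, 2 ^ κ ≤ μ → μ ^ κ ≤ Order.succ μ) → ν ^ ℵ₀ ≤ Order.succ ν)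
    (ν : Cardinal.{0}) (h2 : 2 ^ κ ≤ ν) (hν : ν < lam) : ν ^ κ ≤ Order.succ ν := by
  induction ν using WellFoundedLT.induction with
  | ind ν ih =>
  have IH : ∀ μ < ν, 2 ^ κ ≤ μ → μ ^ κ ≤ Order.succ μ := fun μ h h' => ih μ h h' (h.trans hν)
  rcases h2.eq_or_lt with rfl | h2
  · rw [← Cardinal.power_mul, Cardinal.mul_eq_self hκ]
    exact Order.le_succ _
  have hinf : ℵ₀ ≤ ν := hκ.trans ((Cardinal.cantor κ).le.trans h2.le)
  have hcof : ℵ₀ ≤ ν.ord.cof := (Cardinal.isRegular_cof (Cardinal.isSuccLimit_ord hinf)).aleph0_le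
  rcases lt_or_ge κ ν.ord.cof with h | h
  · exact (power_le_self_of_lt_cof κ ν hκ h2 h IH).trans (Order.le_succ ν)
  rcases hcof.eq_or_lt with h' | h'
  · exact (power_le_power_aleph0 κ ν hκ h2 h'.symm IH).trans (hΩ ν h2 hν h'.symm IH)
  · exact silver κ ν hκ h2 h' h IH

/-! ### Colourings nonconstant on many large sets -/

/-- Transfinite recursion along a well-order of `I` of type `|I|` chooses distinct elements from sets of
size at least `|I|`. -/
theorem exists_injective_choice {I R : Type} (S : I → Set R) (hS : ∀ i, #I ≤ #(S i)) :
    ∃ c : I → R, Function.Injective c ∧ ∀ i, c i ∈ S i := by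
  classical
  have hI : #I = #((#I).ord.ToType) := by rw [Cardinal.mk_ord_toType]
  obtain ⟨e⟩ := Cardinal.eq.1 hI
  have hex : ∀ (i : (#I).ord.ToType) (f : ∀ j, j < i → R),
      ∃ x ∈ S (e.symm i), ∀ j (hj : j < i), f j hj ≠ x := by
    intro i f
    by_contra hcon
    push Not at hcon
    have hsub : S (e.symm i) ⊆ range fun j : Iio i => f j.1 j.2 := by
      intro x hx
      obtain ⟨j, hj, h⟩ := hcon x hx
      exact ⟨⟨j, hj⟩, h⟩
    have := (hS _).trans ((Cardinal.mk_le_mk_of_subset hsub).trans Cardinal.mk_range_le)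
    exact absurd this (not_le.2 (mk_Iio_ord_lt i))
  choose F hF hF' using hex
  let c : (#I).ord.ToType → R := WellFounded.fix (r := (· < ·)) wellFounded_lt F
  have hc : ∀ i, c i = F i fun j _ => c j := fun i => WellFounded.fix_eq _ _ _
  have hne : ∀ i j, j < i → c j ≠ c i := by
    intro i j hj
    rw [hc i]
    exact hF' i (fun j _ => c j) j hj
  refine ⟨fun i => c (e i), ?_, fun i => ?_⟩
  · intro i j hij
    by_contra hne'
    rcases lt_or_gt_of_ne (fun h => hne' (e.injective h)) with h | h
    · exact hne _ _ h hij
    · exact hne _ _ h hij.symm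
  · have := hF (e i) fun j _ => c j
    rw [← hc] at this
    simpa using this

theorem exists_coloring {I R : Type} (hI : ℵ₀ ≤ #I) (S : I → Set R) (hS : ∀ i, #I ≤ #(S i)) :
    ∃ γ : R → ℕ, ∀ i, ∃ x ∈ S i, ∃ y ∈ S i, γ x ≠ γ y := by
  classical
  obtain ⟨c, hc, hcS⟩ := exists_injective_choice (I := I × Bool) (fun p => S p.1) (fun p => by
    simp only [Cardinal.mk_prod, Cardinal.lift_id, Cardinal.mk_bool]
    rw [Cardinal.mul_eq_left hI (ofNat_lt_aleph0.le.trans hI) two_ne_zero]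
    exact hS p.1)
  refine ⟨fun x => if ∃ i, x = c (i, true) then 1 else 0, fun i =>
    ⟨c (i, true), hcS (i, true), c (i, false), hcS (i, false), ?_⟩⟩
  have h1 : ∃ j, c (i, true) = c (j, true) := ⟨i, rfl⟩
  have h2 : ¬ ∃ j, c (i, false) = c (j, true) := by
    rintro ⟨j, hj⟩
    simpa using hc hj
  simp [h1, h2]

/-! ### Basic facts on `P_κ(λ)` -/

/-- The subset of `μ` (as a type in universe `0`) corresponding to `b ∩ μ`, for a set `b` of
ordinals. -/
def trace (μ : Cardinal.{0}) (b : Set Ordinal.{0}) : Set μ.ord.ToType :=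
  {x | (x.toOrd : Ordinal.{0}) ∈ b}

theorem lift_mk_trace (μ : Cardinal.{0}) (b : Set Ordinal.{0}) :
    Cardinal.lift.{1} #(trace μ b) = #(b ∩ Iio μ.ord : Set Ordinal.{0}) := by
  rw [← Cardinal.lift_id'.{0, 1} #(b ∩ Iio μ.ord : Set Ordinal.{0})]
  refine Cardinal.lift_mk_eq'.2 ⟨⟨fun x => ⟨x.1.toOrd, x.2, x.1.toOrd.2⟩,
    fun y => ⟨Ordinal.ToType.mk ⟨y.1, y.2.2⟩, ?_⟩, fun x => ?_, fun y => ?_⟩⟩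
  · simpa [trace] using y.2.1
  · ext; simp
  · ext; simp

theorem mk_trace_lt {κ lam : Cardinal.{0}} (μ : Cardinal.{0}) {b : Set Ordinal.{0}}
    (hb : b ∈ Pkl κ lam) : #(trace μ b) < κ := by
  rw [← Cardinal.lift_lt.{0, 1}, lift_mk_trace]
  exact (Cardinal.mk_le_mk_of_subset inter_subset_left).trans_lt hb.2

theorem pkl_empty {κ lam : Cardinal.{0}} (hκ : 0 < κ) : ∅ ∈ Pkl κ lam :=
  ⟨empty_subset _, by simpa using hκ⟩

theorem pkl_singleton {κ lam : Cardinal.{0}} (hκ : ℵ₀ ≤ κ) {x : Ordinal.{0}} (hx : x < lam.ord) :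
    {x} ∈ Pkl κ lam :=
  ⟨by simpa using hx, by simpa using one_lt_aleph0.trans_le hκ⟩

theorem pkl_union {κ lam : Cardinal.{0}} (hκ : ℵ₀ ≤ κ) {a b : Set Ordinal.{0}}
    (ha : a ∈ Pkl κ lam) (hb : b ∈ Pkl κ lam) : a ∪ b ∈ Pkl κ lam :=
  ⟨union_subset ha.1 hb.1, (Cardinal.mk_union_le _ _).trans_lt
    (Cardinal.add_lt_of_lt (by simpa using hκ) ha.2 hb.2)⟩

theorem pkl_iUnion {κ lam : Cardinal.{0}} (hκ : κ.IsRegular) {ι : Type 1}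
    (hι : #ι < Cardinal.lift.{1} κ) (f : ι → Set Ordinal.{0}) (hf : ∀ i, f i ∈ Pkl κ lam) :
    (⋃ i, f i) ∈ Pkl κ lam := by
  refine ⟨iUnion_subset fun i => (hf i).1, ?_⟩
  have hreg : (Cardinal.lift.{1} κ).IsRegular := hκ.lift
  exact (card_iUnion_lt_iff_forall_of_isRegular hreg hι).2 fun i => (hf i).2

theorem pkl_iUnion_nat {κ lam : Cardinal.{0}} (hκ : κ.IsRegular) (hunc : ℵ₀ < κ)
    (f : ℕ → Set Ordinal.{0}) (hf : ∀ i, f i ∈ Pkl κ lam) :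
    (⋃ i, f i) ∈ Pkl κ lam := by
  have h := pkl_iUnion hκ (ι := ULift.{1} ℕ) (by simpa using hunc) (fun i => f i.down)
    (fun i => hf _)
  have : (⋃ i : ULift.{1} ℕ, f i.down) = ⋃ i, f i := by
    ext x; simp
  rwa [this] at h

/-- `A` is a cofinal subset of `P_κ(λ)`. -/
def CofPkl (κ lam : Cardinal.{0}) (A : Set (Set Ordinal.{0})) : Prop :=
  A ⊆ Pkl κ lam ∧ ∀ e ∈ Pkl κ lam, ∃ b ∈ A, e ⊆ b

/-! ### The homogenisation principle -/

/-- The homogenisation principle over `E ⊆ P_κ(λ)`: an `ω`-colouring of `ρ × A`, with `A ⊆ E` cofinal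
and `ρ` regular between `κ` and `λ`, takes one fixed value on a cofinal part of `A` for `ρ` many
`β < ρ`, up to passing above a set `z β` depending on `β`. -/
def Homog (κ lam : Cardinal.{0}) (E : Set (Set Ordinal.{0})) : Prop :=
  ∀ ρ : Cardinal.{0}, ρ.IsRegular → κ < ρ → ρ < lam → ∀ A ⊆ E, CofPkl κ lam A →
    ∀ G : ρ.ord.ToType → Set Ordinal.{0} → ℕ,
      ∃ (n : ℕ) (B : Set (Set Ordinal.{0})) (Y : Set ρ.ord.ToType)
        (z : ρ.ord.ToType → Set Ordinal.{0}), B ⊆ A ∧ CofPkl κ lam B ∧ #Y = ρ ∧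
        ∀ β ∈ Y, z β ∈ Pkl κ lam ∧ ∀ b ∈ B, z β ⊆ b → G β b = n

/-- For subsets of `E`, positivity for `I_{κ,λ} | E` is cofinality. -/
theorem mem_plusOf_iff {κ lam : Cardinal.{0}} {E A : Set (Set Ordinal.{0})} (hA : A ⊆ E)
    (hE : E ⊆ Pkl κ lam) :
    A ∈ plusOf (restr (Ikl κ lam) (Pkl κ lam) E) (Pkl κ lam) ↔ CofPkl κ lam A := by
  have h : A ∩ E = A := inter_eq_left.2 hA
  have hAP : A ⊆ Pkl κ lam := hA.trans hE
  simp only [plusOf, restr, Ikl, CofPkl, mem_ofPred_eq, h, hAP, true_and]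
  push Not
  rfl

theorem exists_avoid {κ lam : Cardinal.{0}} {E Z : Set (Set Ordinal.{0})}
    (hZ : Z ∈ restr (Ikl κ lam) (Pkl κ lam) E) :
    ∃ z ∈ Pkl κ lam, ∀ b ∈ E, z ⊆ b → b ∉ Z := by
  obtain ⟨-, -, z, hz, h⟩ := hZ
  exact ⟨z, hz, fun b hb hzb hbZ => h b ⟨hbZ, hb⟩ hzb⟩

/-- Apply the partition relation to `F a b = G (φ a) b`, where `φ a < ρ` is a strict upper bound of
`a ∩ ρ`; then `Y = φ '' B` is unbounded in `ρ`. -/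
theorem homog_of_arrow {κ lam : Cardinal.{0}} (hκ : κ.IsRegular) {E : Set (Set Ordinal.{0})}
    (hE : E ⊆ Pkl κ lam)
    (h : ArrowOmegaColors κ lam (restr (Ikl κ lam) (Pkl κ lam) E)) : Homog κ lam E := by
  classical
  intro ρ hρ hκρ hρl A hAE hA G
  have hφ : ∀ a : Set Ordinal.{0}, ∃ x : ρ.ord.ToType, a ∈ Pkl κ lam → ∀ s ∈ trace ρ a, s < x := by
    intro a
    by_cases ha : a ∈ Pkl κ lam
    · obtain ⟨x, hx⟩ := exists_gt_of_small hρ (trace ρ a) ((mk_trace_lt ρ ha).trans hκρ)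
      exact ⟨x, fun _ => hx⟩
    · obtain ⟨x, -⟩ := exists_gt_of_small hρ ∅ (by simpa using hρ.pos)
      exact ⟨x, fun h => absurd h ha⟩
  choose φ hφ using hφ
  obtain ⟨n, B, hB, hBA, Z, hZ, hF⟩ := h (fun a b => G (φ a) b) A ((mem_plusOf_iff hAE hE).2 hA)
  have hBE := hBA.trans hAE
  have hBc := (mem_plusOf_iff hBE hE).1 hB
  have hz : ∀ β : ρ.ord.ToType, ∃ z : Set Ordinal.{0}, β ∈ φ '' B → z ∈ Pkl κ lam ∧
      ∀ b ∈ B, z ⊆ b → G β b = n := by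
    intro β
    by_cases hβ : β ∈ φ '' B
    · obtain ⟨a, ha, rfl⟩ := hβ
      obtain ⟨z, hz, hz'⟩ := exists_avoid (hZ a ha)
      exact ⟨z, fun _ => ⟨hz, fun b hb hzb => hF a ha b hb (hz' b (hBE hb) hzb)⟩⟩
    · exact ⟨∅, fun h => absurd h hβ⟩
  choose z hz using hz
  refine ⟨n, B, φ '' B, z, hBA, hBc, ?_, hz⟩
  refine le_antisymm ((Cardinal.mk_set_le _).trans_eq (Cardinal.mk_ord_toType ρ)) ?_
  by_contra hcon
  obtain ⟨x, hx⟩ := exists_gt_of_small hρ (φ '' B) (not_le.1 hcon)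
  have hxl : (x.toOrd : Ordinal.{0}) < lam.ord :=
    (mem_Iio.1 x.toOrd.2).trans (Cardinal.ord_lt_ord.2 hρl)
  obtain ⟨a, ha, hxa⟩ := hBc.2 _ (pkl_singleton hκ.aleph0_le hxl)
  have h1 := hφ a (hE (hBE ha)) x (hxa rfl)
  exact absurd (hx _ ⟨a, ha, rfl⟩) (not_lt.2 h1.le)

/-- Distributivity decides, for each `(β, n)`, the statement `G β b = n` for all large `b ∈ B`. Some `n`
is decided positively for each `β`, as a union of countably many members of `P_κ(λ)` is in `P_κ(λ)`, and
`n` is the same for `ρ` many `β`. -/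
theorem homog_of_distr {κ lam : Cardinal.{0}} (hκ : κ.IsRegular) (hunc : ℵ₀ < κ)
    {E : Set (Set Ordinal.{0})} (hE : E ⊆ Pkl κ lam)
    (h : DistrPkl κ lam (restr (Ikl κ lam) (Pkl κ lam) E) lam 2) : Homog κ lam E := by
  classical
  intro ρ hρ hκρ hρl A hAE hA G
  set J := restr (Ikl κ lam) (Pkl κ lam) E with hJ
  obtain ⟨ι⟩ : Nonempty (ρ.ord.ToType × ℕ ↪ lam.ord.ToType) := by
    refine Cardinal.le_def _ _ |>.1 ?_
    simp only [Cardinal.mk_prod, Cardinal.lift_id, Cardinal.mk_ord_toType, Cardinal.mk_nat]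
    rw [Cardinal.mul_eq_left hρ.aleph0_le hρ.aleph0_le aleph0_ne_zero]
    exact hρl.le
  -- the class coded by an ordinal below `lam`
  let cls : Ordinal.{0} → Set (Set Ordinal.{0}) := fun α =>
    {b | ∃ p, ((ι p).toOrd : Ordinal.{0}) = α ∧ G p.1 b = p.2}
  let Q : Ordinal.{0} → Set (Set (Set Ordinal.{0})) := fun α =>
    {X | X ∈ plusOf J (Pkl κ lam) ∧ (X = Pkl κ lam ∩ cls α ∨ X = Pkl κ lam \ cls α)}
  have hJsub : ∀ X Y, X ⊆ Y → Y ∈ J → X ∈ J := by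
    rintro X Y hXY ⟨h1, h2, z, hz, h3⟩
    exact ⟨hXY.trans h1, (inter_subset_left).trans (hXY.trans h1), z, hz,
      fun b hb => h3 b ⟨hXY hb.1, hb.2⟩⟩
  have hJun : ∀ X Y, X ∈ J → Y ∈ J → X ∪ Y ∈ J := by
    rintro X Y ⟨h1, h2, z, hz, h3⟩ ⟨h1', h2', z', hz', h3'⟩
    refine ⟨union_subset h1 h1', inter_subset_left.trans (union_subset h1 h1'), z ∪ z',
      pkl_union hκ.aleph0_le hz hz', ?_⟩
    rintro b ⟨hb | hb, hbE⟩ hzb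
    · exact h3 b ⟨hb, hbE⟩ (subset_union_left.trans hzb)
    · exact h3' b ⟨hb, hbE⟩ (subset_union_right.trans hzb)
  have hJe : ∅ ∈ J := ⟨empty_subset _, by simp, ∅, pkl_empty hκ.pos, by simp⟩
  obtain ⟨B, hB, hBA, f, hfQ, hf⟩ := h A ((mem_plusOf_iff hAE hE).2 hA) Q (by
    intro α _
    refine ⟨⟨fun X hX => hX.1, ?_, ?_⟩, ?_⟩
    · rintro X ⟨-, hX⟩ Y ⟨-, hY⟩ hne
      have : X ∩ Y = ∅ := by
        rcases hX with rfl | rfl <;> rcases hY with rfl | rfl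
        · exact absurd rfl hne
        · ext b; simp only [mem_inter_iff, mem_sdiff, mem_empty_iff_false]; tauto
        · ext b; simp only [mem_inter_iff, mem_sdiff, mem_empty_iff_false]; tauto
        · exact absurd rfl hne
      rw [this]; exact hJe
    · rintro X ⟨hXP, hX⟩
      by_contra hcon
      push Not at hcon
      have hside : ∀ S : Set (Set Ordinal.{0}), S ⊆ Pkl κ lam →
          (S = Pkl κ lam ∩ cls α ∨ S = Pkl κ lam \ cls α) → S ∩ X ∈ J := by
        intro S hS hS'
        by_cases hSJ : S ∈ J
        · exact hJsub _ _ inter_subset_left hSJ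
        · exact hcon S ⟨⟨hS, hSJ⟩, hS'⟩
      refine hX (hJsub _ _ ?_ (hJun _ _ (hside _ inter_subset_left (Or.inl rfl))
        (hside _ sdiff_subset (Or.inr rfl))))
      intro b hb
      have := hXP hb
      by_cases hbc : b ∈ cls α
      · exact Or.inl ⟨⟨this, hbc⟩, hb⟩
      · exact Or.inr ⟨⟨this, hbc⟩, hb⟩
    · have hsub : Q α ⊆ {Pkl κ lam ∩ cls α, Pkl κ lam \ cls α} := fun X hX => hX.2
      refine (Cardinal.mk_le_mk_of_subset hsub).trans ?_
      refine (Cardinal.mk_insert_le).trans ?_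
      simp [one_add_one_eq_two])
  have hBE := hBA.trans hAE
  have hBc := (mem_plusOf_iff hBE hE).1 hB
  have hlt : ∀ p, ((ι p).toOrd : Ordinal.{0}) < lam.ord := fun p => (ι p).toOrd.2
  have hcls : ∀ p b, b ∈ cls (ι p).toOrd ↔ G p.1 b = p.2 := by
    intro p b
    constructor
    · rintro ⟨q, hq, hb⟩
      have : q = p := ι.injective (Ordinal.ToType.mk.symm.injective (Subtype.ext hq))
      exact this ▸ hb
    · intro hb
      exact ⟨p, rfl, hb⟩
  -- above some `z`, the statement `G β b = n` has a constant truth value on `B`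
  have hdec : ∀ p : ρ.ord.ToType × ℕ, ∃ z ∈ Pkl κ lam,
      (∀ b ∈ B, z ⊆ b → G p.1 b = p.2) ∨ (∀ b ∈ B, z ⊆ b → G p.1 b ≠ p.2) := by
    intro p
    obtain ⟨z, hz, hz'⟩ := exists_avoid (hf _ (hlt p))
    refine ⟨z, hz, ?_⟩
    have hin : ∀ b ∈ B, z ⊆ b → b ∈ f (ι p).toOrd := by
      intro b hb hzb
      by_contra hc
      exact hz' b (hBE hb) hzb ⟨hb, hc⟩
    rcases (hfQ _ (hlt p)).2 with h1 | h1
    · left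
      intro b hb hzb
      have := hin b hb hzb
      rw [h1] at this
      exact (hcls p b).1 this.2
    · right
      intro b hb hzb hG
      have := hin b hb hzb
      rw [h1] at this
      exact this.2 ((hcls p b).2 hG)
  choose z hz hzd using hdec
  have hyes : ∀ β, ∃ n, ∀ b ∈ B, z (β, n) ⊆ b → G β b = n := by
    intro β
    by_contra hcon
    push Not at hcon
    obtain ⟨b, hb, hbz⟩ := hBc.2 _ (pkl_iUnion_nat hκ hunc (fun n => z (β, n)) fun n => hz _)
    have hbz' : ∀ n, z (β, n) ⊆ b := fun n => (subset_iUnion (fun n => z (β, n)) n).trans hbz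
    rcases hzd (β, G β b) with h1 | h1
    · obtain ⟨b', hb', hzb', hne⟩ := hcon (G β b)
      exact hne (h1 b' hb' hzb')
    · exact h1 b hb (hbz' _) rfl
  choose n hn using hyes
  obtain ⟨m, hm⟩ := Cardinal.infinite_pigeonhole_card n ρ (by rw [Cardinal.mk_ord_toType])
    hρ.aleph0_le (by rw [hρ.cof_ord, Cardinal.mk_nat]; exact hunc.trans hκρ)
  refine ⟨m, B, n ⁻¹' {m}, fun β => z (β, m), hBA, hBc, ?_, ?_⟩
  · exact le_antisymm ((Cardinal.mk_set_le _).trans_eq (Cardinal.mk_ord_toType ρ)) hm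
  · intro β hβ
    refine ⟨hz _, ?_⟩
    have : n β = m := hβ
    have h1 := hn β
    rw [this] at h1
    exact h1

/-! ### Countable cofinality -/

/-- The case of countable cofinality. With `ζ b` a strict upper bound of `b ∩ ν⁺` and `g ζ` an injection of
`ζ` into `ν`, colour `(β, b)` by the least `n` such that `g (ζ b) β` is below the `n`-th term of a cofinal
sequence in `ν`. A countable sequence `s` in the homogeneous set `Y` is then determined by `ζ b`, for a
suitable `b`, and the sequence `g (ζ b) ∘ s` in a proper initial segment of `ν`. -/
theorem power_aleph0_le_succ {κ lam : Cardinal.{0}} (hκ : κ.IsRegular) (hunc : ℵ₀ < κ)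
    (hlim : ∀ ν < lam, Order.succ ν < lam) {E A : Set (Set Ordinal.{0})} (hE : E ⊆ Pkl κ lam)
    (hAE : A ⊆ E) (hA : CofPkl κ lam A) (hH : Homog κ lam E)
    (ν : Cardinal.{0}) (h2 : 2 ^ κ < ν) (hν : ν < lam) (hc : ν.ord.cof = ℵ₀)
    (IH : ∀ μ < ν, 2 ^ κ ≤ μ → μ ^ κ ≤ Order.succ μ) : ν ^ ℵ₀ ≤ Order.succ ν := by
  classical
  have hκν : κ < ν := (Cardinal.cantor κ).trans h2
  have hinf : ℵ₀ ≤ ν := hκ.aleph0_le.trans hκν.le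
  obtain ⟨ρ, hρdef⟩ : ∃ ρ, ρ = Order.succ ν := ⟨_, rfl⟩
  have hρ : ρ.IsRegular := hρdef ▸ Cardinal.isRegular_succ hinf
  have hνρ : ν < ρ := hρdef ▸ Order.lt_succ ν
  obtain ⟨c, hcc⟩ := exists_omega_cofinal hinf hc
  let V := ν.ord.ToType
  let R := ρ.ord.ToType
  have hg : ∀ ζ : R, ∃ g : R → V, InjOn g (Iio ζ) := by
    intro ζ
    have hle : #(Iio ζ) ≤ #V := by
      rw [Cardinal.mk_ord_toType]
      exact Order.lt_succ_iff.1 (hρdef ▸ mk_Iio_ord_lt ζ)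
    obtain ⟨e⟩ := Cardinal.le_def _ _ |>.1 hle
    refine ⟨fun x => if hx : x ∈ Iio ζ then e ⟨x, hx⟩ else c 0, ?_⟩
    intro x hx y hy hxy
    simp only [dif_pos hx, dif_pos hy] at hxy
    exact congrArg Subtype.val (e.injective hxy)
  choose g hg using hg
  have hζ : ∀ b : Set Ordinal.{0}, ∃ x : R, b ∈ Pkl κ lam → ∀ s ∈ trace ρ b, s < x := by
    intro b
    by_cases hb : b ∈ Pkl κ lam
    · obtain ⟨x, hx⟩ := exists_gt_of_small hρ (trace ρ b) ((mk_trace_lt ρ hb).trans (hκν.trans hνρ))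
      exact ⟨x, fun _ => hx⟩
    · obtain ⟨x, -⟩ := exists_gt_of_small hρ ∅ (by simpa using hρ.pos)
      exact ⟨x, fun h => absurd h hb⟩
  choose ζ hζ using hζ
  obtain ⟨n, B, Y, z, hBA, hB, hY, hYz⟩ := hH ρ hρ (hκν.trans hνρ) (hρdef ▸ hlim ν hν) A hAE hA
    (fun β b => Nat.find (hcc (g (ζ b) β)))
  have hcode : ∀ s : ℕ → Y, ∃ p : R × (ℕ → Iio (c n)),
      ∀ k, (s k : R) < p.1 ∧ g p.1 (s k) = p.2 k := by
    intro s
    have hpk : ∀ k, z (s k) ∪ {((s k : R).toOrd : Ordinal.{0})} ∈ Pkl κ lam := fun k =>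
      pkl_union hκ.aleph0_le (hYz _ (s k).2).1 (pkl_singleton hκ.aleph0_le
        ((mem_Iio.1 (s k : R).toOrd.2).trans (Cardinal.ord_lt_ord.2 (hρdef ▸ hlim ν hν))))
    obtain ⟨b, hb, hsb⟩ := hB.2 _ (pkl_iUnion_nat hκ hunc _ hpk)
    have hsb' := fun k => (subset_iUnion _ k).trans hsb
    have hlt : ∀ k, g (ζ b) (s k) < c n := by
      intro k
      have h1 := (hYz _ (s k).2).2 b hb (subset_union_left.trans (hsb' k))
      rw [← h1]
      exact Nat.find_spec (hcc (g (ζ b) (s k)))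
    exact ⟨⟨ζ b, fun k => ⟨_, hlt k⟩⟩, fun k =>
      ⟨hζ b (hE (hAE (hBA hb))) _ (hsb' k (Or.inr rfl)), rfl⟩⟩
  choose p hp using hcode
  have hinj : Function.Injective p := by
    intro s t hst
    funext k
    have h1 := hp s k
    have h2 := hp t k
    rw [← hst] at h2
    exact Subtype.ext (hg _ h1.1 h2.1 (h1.2.trans h2.2.symm))
  have h1 := Cardinal.mk_le_of_injective hinj
  rw [Cardinal.mk_prod, Cardinal.lift_id, Cardinal.lift_id, ← Cardinal.power_def,
    ← Cardinal.power_def, hY, Cardinal.mk_nat, Cardinal.mk_ord_toType] at h1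
  rw [← hρdef]
  calc ν ^ ℵ₀ ≤ ρ ^ ℵ₀ := Cardinal.power_le_power_right hνρ.le
    _ ≤ ρ * #(Iio (c n)) ^ ℵ₀ := h1
    _ ≤ ρ * ρ := by
      gcongr
      calc #(Iio (c n)) ^ ℵ₀ ≤ (max #(Iio (c n)) 1) ^ κ :=
            (Cardinal.power_le_power_right (le_max_left _ _)).trans
              (Cardinal.power_le_power_left (by
                exact (lt_of_lt_of_le zero_lt_one (le_max_right _ _)).ne') hunc.le)
        _ ≤ ν := power_le_of_lt h2 (max_lt (mk_Iio_ord_lt _) (one_lt_aleph0.trans_le hinf)) IH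
        _ ≤ ρ := hνρ.le
    _ = ρ := Cardinal.mul_eq_self hρ.aleph0_le

/-! ### Closed sets are cofinal -/

/-- The members of a club that lie in `S^λ_{κ,λ}`, are infinite, and are closed under a given
`Z : λ × λ → P_κ(λ)` form a cofinal set: close off in `ω` steps, at each step putting in the ordinals
below the cardinality of the previous set. -/
theorem cofinal_closed {κ lam : Cardinal.{0}} (hκ : κ.IsRegular) (hunc : ℵ₀ < κ) (hkl : κ ≤ lam)
    {C : Set (Set Ordinal.{0})} (hC : IsClubPkl κ lam C)
    (Z : Ordinal.{0} → Ordinal.{0} → Set Ordinal.{0}) (hZ : ∀ η ξ, Z η ξ ∈ Pkl κ lam) :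
    CofPkl κ lam {b | b ∈ C ∩ Slamset κ lam ∧ ℵ₀ ≤ #b ∧ ∀ η ∈ b, ∀ ξ ∈ b, Z η ξ ⊆ b} := by
  obtain ⟨hCP, hCc, hCcl⟩ := hC
  refine ⟨fun b hb => hCP hb.1.1, fun e he => ?_⟩
  have hlift : ℵ₀ < Cardinal.lift.{1} κ := by simpa using hunc
  have hcard : ∀ b : Set Ordinal.{0}, b ∈ Pkl κ lam →
      ∃ o : Ordinal.{0}, o < κ.ord ∧ Cardinal.lift.{1} o.card = #b := by
    intro b hb
    obtain ⟨μ, hμ, hμb⟩ := Cardinal.lt_lift_iff.1 hb.2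
    exact ⟨μ.ord, Cardinal.ord_lt_ord.2 hμ, by rw [Cardinal.card_ord, hμb]⟩
  have hIio : ∀ o : Ordinal.{0}, o < κ.ord → Iio o ∈ Pkl κ lam := by
    intro o ho
    refine ⟨Iio_subset_Iio (ho.le.trans (Cardinal.ord_le_ord.2 hkl)), ?_⟩
    rw [Cardinal.mk_Iio_ordinal, Cardinal.lift_lt]
    exact Cardinal.lt_ord.1 ho
  have hω : Ordinal.omega0.{0} < κ.ord := by
    rw [← Cardinal.ord_aleph0]; exact Cardinal.ord_lt_ord.2 hunc
  -- one step of the closure process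
  have hstep : ∀ b, b ∈ Pkl κ lam → ∃ b' ∈ C, b ⊆ b' ∧ (∀ η ∈ b, ∀ ξ ∈ b, Z η ξ ⊆ b') ∧
      #b ≤ #(b' ∩ Iio κ.ord : Set Ordinal.{0}) ∧ Iio Ordinal.omega0 ⊆ b' := by
    intro b hb
    obtain ⟨o, ho, hob⟩ := hcard b hb
    have hprod : #(b ×ˢ b : Set (Ordinal.{0} × Ordinal.{0})) < Cardinal.lift.{1} κ := by
      rw [Cardinal.mk_setProd]
      simpa using Cardinal.mul_lt_of_lt hlift.le hb.2 hb.2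
    have h1 := pkl_iUnion hκ (lam := lam) hprod (fun p => Z p.1.1 p.1.2) fun p => hZ _ _
    have h2 := hIio o ho
    have h3 := hIio _ hω
    obtain ⟨b', hb', hsub⟩ := hCc _ (pkl_union hκ.aleph0_le hb (pkl_union hκ.aleph0_le h1
      (pkl_union hκ.aleph0_le h2 h3)))
    simp only [union_subset_iff] at hsub
    refine ⟨b', hb', hsub.1, fun η hη ξ hξ => ?_, ?_, hsub.2.2.2⟩
    · exact (subset_iUnion (fun p : (b ×ˢ b : Set (Ordinal.{0} × Ordinal.{0})) => Z p.1.1 p.1.2)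
        ⟨(η, ξ), hη, hξ⟩).trans hsub.2.1
    · rw [← hob, ← Cardinal.mk_Iio_ordinal]
      exact Cardinal.mk_le_mk_of_subset
        (subset_inter hsub.2.2.1 (Iio_subset_Iio ho.le))
  choose F hFC hF hFZ hFcard hFω using hstep
  obtain ⟨b₀, hb₀, heb₀⟩ := hCc e he
  let s : ℕ → C := fun n => Nat.rec ⟨b₀, hb₀⟩ (fun _ b => ⟨F b.1 (hCP b.2), hFC _ _⟩) n
  have hs : ∀ n, (s (n + 1)).1 = F (s n).1 (hCP (s n).2) := fun n => rfl
  have hmono : Monotone fun n => (s n).1 := monotone_nat_of_le_succ fun n => by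
    rw [hs]; exact hF _ _
  have hbC : (⋃ n, (s n).1) ∈ C := by
    have h1 := hCcl Ordinal.omega0 Ordinal.omega0_pos hω (fun i => (s i.card.toNat).1)
      (fun i _ => (s _).2) (fun i j hij hj => hmono (by
        refine Cardinal.toNat_le_toNat (Ordinal.card_le_card hij) ?_
        obtain ⟨n, rfl⟩ := Ordinal.lt_omega0.1 hj
        simp))
    have h2 : (⋃ i ∈ Iio Ordinal.omega0.{0}, (s i.card.toNat).1) = ⋃ n, (s n).1 := by
      ext x
      simp only [mem_iUnion, mem_Iio]
      constructor
      · rintro ⟨i, -, hx⟩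
        exact ⟨_, hx⟩
      · rintro ⟨n, hx⟩
        exact ⟨n, Ordinal.natCast_lt_omega0 n, by simpa using hx⟩
    rwa [h2] at h1
  have hsub : ∀ n, (s n).1 ⊆ ⋃ n, (s n).1 := fun n => subset_iUnion (fun n => (s n).1) n
  have hωb : Iio Ordinal.omega0 ⊆ ⋃ n, (s n).1 := by
    refine Subset.trans ?_ (hsub 1)
    exact hFω _ (hCP (s 0).2)
  have hinf : ℵ₀ ≤ #((⋃ n, (s n).1) ∩ Iio κ.ord : Set Ordinal.{0}) := by
    refine le_trans ?_ (Cardinal.mk_le_mk_of_subset (subset_inter hωb (Iio_subset_Iio hω.le)))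
    rw [Cardinal.mk_Iio_ordinal]
    simp
  have hle := Cardinal.mk_le_mk_of_subset
    (inter_subset_left : (⋃ n, (s n).1) ∩ Iio κ.ord ⊆ ⋃ n, (s n).1)
  refine ⟨⋃ n, (s n).1, ⟨⟨hbC, hCP hbC, le_antisymm ?_ hle⟩, hinf.trans hle, ?_⟩,
    heb₀.trans (hsub 0)⟩
  · have h1 := Cardinal.mk_iUnion_le_lift (fun n => (s n).1)
    simp only [Cardinal.lift_id'.{0, 1}, Cardinal.mk_nat, Cardinal.lift_aleph0] at h1
    refine h1.trans (Cardinal.mul_le_of_le hinf hinf ?_)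
    refine ciSup_le' fun n => ?_
    refine (hFcard _ (hCP (s n).2)).trans (Cardinal.mk_le_mk_of_subset ?_)
    exact inter_subset_inter_left _ (hsub (n + 1))
  · intro η hη ξ hξ
    obtain ⟨n, hn⟩ := mem_iUnion.1 hη
    obtain ⟨m, hm⟩ := mem_iUnion.1 hξ
    refine Subset.trans ?_ (hsub (max n m + 1))
    rw [hs]
    exact hFZ _ _ η (hmono (le_max_left n m) hn) ξ (hmono (le_max_right n m) hm)

/-! ### Failure of the homogenisation principle -/

/-- A set of size at most `|K|` is the set of defined values of a partial function on `K`. -/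
theorem exists_option_enum {K X : Type} (S : Set X) (hS : #S ≤ #K) :
    ∃ w : K → Option X, ∀ y, y ∈ S ↔ ∃ k, w k = some y := by
  classical
  obtain ⟨e⟩ := Cardinal.le_def _ _ |>.1 hS
  have he := e.injective.isPartialInv
  refine ⟨fun k => (Function.partialInv e k).map Subtype.val, fun y => ⟨fun hy => ?_, ?_⟩⟩
  · exact ⟨e ⟨y, hy⟩, by simp [(he ⟨y, hy⟩ (e ⟨y, hy⟩)).2 rfl]⟩
  · rintro ⟨k, hk⟩
    simp only [Option.map_eq_some_iff] at hk
    obtain ⟨x, -, rfl⟩ := hk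
    exact x.2

theorem succ_lt_of_cof {κ lam : Cardinal.{0}} (hκ : ℵ₀ ≤ κ) (hlt : κ < lam)
    (hcf : lam.ord.cof = κ) : ∀ ν < lam, Order.succ ν < lam := by
  intro ν hν
  refine lt_of_le_of_ne (Order.succ_le_of_lt hν) fun h => ?_
  have hκν : κ ≤ ν := Order.lt_succ_iff.1 (h ▸ hlt)
  have := (Cardinal.isRegular_succ (hκ.trans hκν)).cof_ord
  rw [h, hcf] at this
  exact hlt.ne this

/-- By König's theorem, `cf (2 ^ κ) > κ`, so `2 ^ κ` is not `λ`. -/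
theorem two_power_lt {κ lam : Cardinal.{0}} (hκ : ℵ₀ ≤ κ)
    (hcf : lam.ord.cof = κ) (h2κ : 2 ^ κ ≤ lam) : 2 ^ κ < lam := by
  refine lt_of_le_of_ne h2κ fun h => ?_
  have := Cardinal.lt_power_cof_ord (c := lam) (hκ.trans ((Cardinal.cantor κ).le.trans h2κ))
  rw [hcf, ← h, ← Cardinal.power_mul, Cardinal.mul_eq_self hκ] at this
  exact lt_irrefl _ this

/-- Bounded `κ`-sequences of members of `P_κ(λ)` are coded by functions `κ × κ → Option (Iio x)`, with `x < λ`.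
Such a code may also describe sets of size `κ`; those are ignored in the closure condition `Z`. -/
theorem not_homog {κ lam : Cardinal.{0}} (hκ : κ.IsRegular) (hunc : ℵ₀ < κ) (hkl : κ ≤ lam)
    (hcf : lam.ord.cof = κ) (h2κ : 2 ^ κ ≤ lam) {C D : Set (Set Ordinal.{0})}
    (hC : IsClubPkl κ lam C) (hCD : C ⊆ D) (hD : D ⊆ Pkl κ lam)
    (hH : Homog κ lam (D ∩ Slamset κ lam)) : False := by
  classical
  have hE : D ∩ Slamset κ lam ⊆ Pkl κ lam := inter_subset_left.trans hD
  have h2lt : 2 ^ κ < lam := two_power_lt hκ.aleph0_le hcf h2κ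
  have hκlt : κ < lam := (Cardinal.cantor κ).trans h2lt
  have hinf : ℵ₀ ≤ lam := hκ.aleph0_le.trans hkl
  have hlim := succ_lt_of_cof hκ.aleph0_le hκlt hcf
  have hA0 := cofinal_closed hκ hunc hkl hC (fun _ _ => ∅) fun _ _ => pkl_empty hκ.pos
  have hpow : ∀ μ < lam, μ ^ κ ≤ lam := fun μ hμ =>
    power_le_of_lt h2lt hμ fun ν hν h2ν => power_le_succ κ lam hκ.aleph0_le
      (power_aleph0_le_succ hκ hunc hlim hE
        (fun b hb => ⟨hCD hb.1.1, hb.1.2⟩) hA0 hH) ν h2ν hν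
  obtain ⟨ρ, hρdef⟩ : ∃ ρ, ρ = Order.succ κ := ⟨_, rfl⟩
  have hρ : ρ.IsRegular := hρdef ▸ Cardinal.isRegular_succ hκ.aleph0_le
  have hκρ : κ < ρ := hρdef ▸ Order.lt_succ κ
  have hρlam : ρ < lam := hρdef ▸ hlim κ hκlt
  let K := κ.ord.ToType
  let L := lam.ord.ToType
  let R := ρ.ord.ToType
  have hK : #K = κ := Cardinal.mk_ord_toType κ
  have hL : #L = lam := Cardinal.mk_ord_toType lam
  have hR : #R = ρ := Cardinal.mk_ord_toType ρ
  let T := Σ x : L, (K → R) × (K → K → Option (Iio x))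
  have hT : #T ≤ #L := by
    rw [Cardinal.mk_sigma]
    refine (Cardinal.sum_le_mk_mul_iSup _).trans (Cardinal.mul_le_of_le (hL.symm ▸ hinf) le_rfl ?_)
    refine ciSup_le' fun x => ?_
    rw [Cardinal.mk_prod, Cardinal.lift_id, Cardinal.lift_id, ← Cardinal.power_def,
      ← Cardinal.power_def, ← Cardinal.power_def, ← Cardinal.power_mul, hK, hR, hL,
      Cardinal.mul_eq_self hκ.aleph0_le, Cardinal.mk_option]
    exact Cardinal.mul_le_of_le hinf (hpow ρ hρlam) (hpow _ (Cardinal.add_lt_of_lt hinf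
      (mk_Iio_ord_lt x) (one_lt_aleph0.trans_le hinf)))
  have hTne : Nonempty T := by
    obtain ⟨x, -⟩ := exists_mk_Iio_eq hκlt
    obtain ⟨r, -⟩ := exists_mk_Iio_eq hκρ
    exact ⟨⟨x, fun _ => r, fun _ _ => none⟩⟩
  obtain ⟨τ, hτ⟩ : ∃ τ : L → T, Function.Surjective τ := by
    obtain ⟨e⟩ := Cardinal.le_def _ _ |>.1 hT
    exact ⟨Function.invFun e, Function.invFun_surjective e.injective⟩
  let W : T → K → Set Ordinal.{0} := fun p k =>
    {o | ∃ ζ, ∃ y : Iio p.1, p.2.2 k ζ = some y ∧ ((y : L).toOrd : Ordinal.{0}) = o}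
  let Z : Ordinal.{0} → Ordinal.{0} → Set Ordinal.{0} := fun η ξ =>
    {o | ∃ (x : L) (k : K), (x.toOrd : Ordinal.{0}) = η ∧ (k.toOrd : Ordinal.{0}) = ξ ∧
      W (τ x) k ∈ Pkl κ lam ∧ o ∈ W (τ x) k}
  have hZ : ∀ η ξ, Z η ξ ∈ Pkl κ lam := by
    intro η ξ
    by_cases hex : ∃ (x : L) (k : K), (x.toOrd : Ordinal.{0}) = η ∧
      (k.toOrd : Ordinal.{0}) = ξ ∧ W (τ x) k ∈ Pkl κ lam
    · obtain ⟨x, k, hx, hk, hW⟩ := hex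
      have hsub : Z η ξ ⊆ W (τ x) k := by
        rintro o ⟨x', k', hx', hk', -, ho⟩
        have h1 : x' = x := Ordinal.ToType.mk.symm.injective (Subtype.ext (hx'.trans hx.symm))
        have h2 : k' = k := Ordinal.ToType.mk.symm.injective (Subtype.ext (hk'.trans hk.symm))
        rwa [h1, h2] at ho
      exact ⟨hsub.trans hW.1, (Cardinal.mk_le_mk_of_subset hsub).trans_lt hW.2⟩
    · have : Z η ξ = ∅ := by
        refine eq_empty_of_forall_notMem ?_
        rintro o ⟨x, k, hx, hk, hW, -⟩
        exact hex ⟨x, k, hx, hk, hW⟩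
      rw [this]; exact pkl_empty hκ.pos
  have hA := cofinal_closed hκ hunc hkl hC Z hZ
  set A := {b | b ∈ C ∩ Slamset κ lam ∧ ℵ₀ ≤ #b ∧ ∀ η ∈ b, ∀ ξ ∈ b, Z η ξ ⊆ b} with hAdef
  -- the colouring attached to `b` splits `t[b ∩ κ]` for every injective `t` with index in `b`
  have hγ : ∀ b : Set Ordinal.{0}, ∃ γ : R → ℕ, b ∈ A → ∀ x ∈ trace lam b,
      Function.Injective (τ x).2.1 →
      ∃ k ∈ trace κ b, ∃ k' ∈ trace κ b, γ ((τ x).2.1 k) ≠ γ ((τ x).2.1 k') := by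
    intro b
    by_cases hb : b ∈ A
    swap
    · exact ⟨fun _ => 0, fun h => absurd h hb⟩
    have hbP : b ∈ Pkl κ lam := hA.1 hb
    have hbl : Cardinal.lift.{1} #(trace lam b) = #b := by
      rw [lift_mk_trace, inter_eq_left.2 hbP.1]
    have heq : #(trace lam b) = #(trace κ b) := by
      rw [← Cardinal.lift_inj.{0, 1}, hbl, lift_mk_trace]
      exact hb.1.2.2
    obtain ⟨γ, hγ⟩ := exists_coloring (I := trace lam b) (R := R)
      (by rw [← Cardinal.lift_le.{1}, hbl]; simpa using hb.2.1)
      (fun x => if Function.Injective (τ x).2.1 then (τ x).2.1 '' trace κ b else Set.univ) (by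
        intro x
        by_cases hx : Function.Injective (τ x).2.1
        · simp only [if_pos hx]
          rw [Cardinal.mk_image_eq hx, heq]
        · simp only [if_neg hx]
          rw [Cardinal.mk_univ, hR]
          exact ((mk_trace_lt lam hbP).trans hκρ).le)
    refine ⟨γ, fun _ x hx hinj => ?_⟩
    obtain ⟨y, hy, y', hy', hne⟩ := hγ ⟨x, hx⟩
    simp only [if_pos hinj] at hy hy'
    obtain ⟨k, hk, rfl⟩ := hy
    obtain ⟨k', hk', rfl⟩ := hy'
    exact ⟨k, hk, k', hk', hne⟩
  choose γ hγ using hγ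
  obtain ⟨n, B, Y, z, hBA, hB, hY, hYz⟩ := hH ρ hρ hκρ hρlam A
    (fun b hb => ⟨hCD hb.1.1, hb.1.2⟩) hA (fun β b => γ b β)
  -- since `cf λ = κ`, the sets `z β` are bounded by one of `κ` many elements `c j`
  obtain ⟨c, hc⟩ : ∃ c : K → L, ∀ x, ∃ j, x ≤ c j := by
    have := exists_cofinal_fun lam
    rwa [hcf] at this
  have hj : ∀ β : Y, ∃ j : K, ∀ y ∈ trace lam (z β), y < c j := by
    intro β
    have hsm := mk_trace_lt lam (hYz β.1 β.2).1
    by_contra hcon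
    push Not at hcon
    have hcof : IsCofinal (trace lam (z β)) := by
      intro x
      obtain ⟨j, hj⟩ := hc x
      obtain ⟨y, hy, hy'⟩ := hcon j
      exact ⟨y, hy, hj.trans hy'⟩
    have h1 := Order.cof_le hcof
    rw [Ordinal.cof_toType, hcf] at h1
    exact absurd h1 (not_le.2 hsm)
  choose j hj using hj
  obtain ⟨j₀, hj₀⟩ := Cardinal.infinite_pigeonhole_card j ρ hY.ge hρ.aleph0_le
    (by rw [hρ.cof_ord, hK]; exact hκρ)
  obtain ⟨t⟩ : Nonempty (K ↪ j ⁻¹' {j₀}) :=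
    Cardinal.le_def _ _ |>.1 (hK.trans_le (hκρ.le.trans hj₀))
  have hw : ∀ k : K, ∃ w : K → Option (Iio (c j₀)),
      ∀ y : Iio (c j₀), (y : L) ∈ trace lam (z (t k).1) ↔ ∃ ζ, w ζ = some y := by
    intro k
    refine exists_option_enum {y : Iio (c j₀) | (y : L) ∈ trace lam (z (t k).1)} ?_
    rw [hK]
    refine le_trans ?_ (mk_trace_lt lam (hYz _ (t k).1.2).1).le
    exact Cardinal.mk_le_of_injective (f := fun y => ⟨y.1.1, y.2⟩) (by
      intro y y' h
      simpa [Subtype.ext_iff] using h)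
  choose w hw using hw
  obtain ⟨x, hx⟩ := hτ ⟨c j₀, fun k => (t k).1.1, w⟩
  have hWz : ∀ k, W (τ x) k = z (t k).1 := by
    intro k
    rw [hx]
    ext o
    constructor
    · rintro ⟨ζ, y, hy, rfl⟩
      exact (hw k y).2 ⟨ζ, hy⟩
    · intro ho
      have hol : o < lam.ord := (hYz _ (t k).1.2).1.1 ho
      have hy : (Ordinal.ToType.mk ⟨o, hol⟩ : L) ∈ trace lam (z (t k).1) := by
        simpa [trace] using ho
      have hlt : (Ordinal.ToType.mk ⟨o, hol⟩ : L) < c j₀ := by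
        have h1 : j (t k).1 = j₀ := (t k).2
        rw [← h1]
        exact hj _ _ hy
      obtain ⟨ζ, hζ⟩ := (hw k ⟨_, hlt⟩).1 hy
      exact ⟨ζ, ⟨_, hlt⟩, hζ, by simp⟩
  have hinj : Function.Injective (τ x).2.1 := by
    rw [hx]
    intro k k' h
    exact t.injective (Subtype.ext (Subtype.ext h))
  obtain ⟨b, hb, hxb⟩ := hB.2 _ (pkl_singleton hκ.aleph0_le (mem_Iio.1 x.toOrd.2))
  have hxb' : (x.toOrd : Ordinal.{0}) ∈ b := hxb rfl
  have hbA := hBA hb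
  have hcol : ∀ k ∈ trace κ b, γ b ((τ x).2.1 k) = n := by
    intro k hk
    have hsub : z (t k).1 ⊆ b := by
      refine Subset.trans ?_ (hbA.2.2 _ hxb' _ hk)
      intro o ho
      refine ⟨x, k, rfl, rfl, ?_, ?_⟩
      · rw [hWz]; exact (hYz _ (t k).1.2).1
      · rw [hWz]; exact ho
    rw [hx]
    exact (hYz _ (t k).1.2).2 b hb hsub
  obtain ⟨k, hk, k', hk', hne⟩ := hγ b hbA x hxb' hinj
  exact hne ((hcol k hk).trans (hcol k' hk').symm)


/-- if `cf(λ) = κ`, `2^κ ≤ λ`, `D ∈ NS⋆_{κ,λ}` and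
`J = I_{κ,λ} | (D ∩ S^λ_{κ,λ})`, then (i) `J⁺ →_J (J⁺)²_ω` fails, and
(ii) `J` is not `(λ, 2)`-distributive. -/
theorem stmt19 (κ lam : Cardinal.{0}) (hreg : κ.IsRegular) (hunc : ℵ₀ < κ)
    (hkl : κ ≤ lam) (hcf : lam.ord.cof = κ) (h2κ : (2 : Cardinal.{0}) ^ κ ≤ lam)
    (D : Set (Set Ordinal.{0})) (hD : D ⊆ Pkl κ lam)
    (hDclub : ∃ C, IsClubPkl κ lam C ∧ C ⊆ D) :
    ¬ArrowOmegaColors κ lam (restr (Ikl κ lam) (Pkl κ lam) (D ∩ Slamset κ lam)) ∧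
    ¬DistrPkl κ lam (restr (Ikl κ lam) (Pkl κ lam) (D ∩ Slamset κ lam)) lam 2 := by
  obtain ⟨C, hC, hCD⟩ := hDclub
  have hE : D ∩ Slamset κ lam ⊆ Pkl κ lam := inter_subset_left.trans hD
  exact ⟨fun h => not_homog hreg hunc hkl hcf h2κ hC hCD hD (homog_of_arrow hreg hE h),
    fun h => not_homog hreg hunc hkl hcf h2κ hC hCD hD (homog_of_distr hreg hunc hE h)⟩
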